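/- arXiv:1712.04549 — 4 statements merged into one kernel-verified Lean document; each statement's English description precedes it below -/
import Mathlib

section
/- Let (T,X) be a tree-decomposition of a graph G, let η: T_1 ↪ T be an ordered cascade in (T,X) with orderings ξ_t of height one and size s + |I|, where I is the common intersection set, let t_0 be the major vertex of T_1, and let i, j ∈ {1,2,...,s} be distinct. If t_0 has property AB_{ij} in η, then t_0 has property A_{ij} or property B_{ij} in η. -/
/-!
Common definitions: minors, widths, connectivity, the specific graphs
`K4`, `K23`, `C32`, `graphA`, the binary trees `CT_h`, the graphs `𝒫_k`, `𝒬_k`,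
the trees `T_h`, homeomorphic embeddings, cascades, and related notions,
following Dang--Thomas, "Minors of two-connected graphs of large path-width".
-/

open SimpleGraph

/-- A minor model of `H` in `G`: branch sets `f w` are nonempty, connected,
pairwise disjoint, and edges of `H` are realized by edges of `G` between branch sets. -/
def IsMinorModel {W V : Type*} (H : SimpleGraph W) (G : SimpleGraph V) (f : W → Set V) : Prop :=
  (∀ w, (f w).Nonempty) ∧
  (∀ w, (G.induce (f w)).Connected) ∧
  (∀ w₁ w₂ : W, w₁ ≠ w₂ → Disjoint (f w₁) (f w₂)) ∧
  (∀ w₁ w₂ : W, H.Adj w₁ w₂ → ∃ v₁ ∈ f w₁, ∃ v₂ ∈ f w₂, G.Adj v₁ v₂)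

/-- `H` is (isomorphic to) a minor of `G`. -/
def IsMinor {W V : Type*} (H : SimpleGraph W) (G : SimpleGraph V) : Prop :=
  ∃ f : W → Set V, IsMinorModel H G f

/-- The complete graph on four vertices. -/
def K4 : SimpleGraph (Fin 4) := ⊤

/-- The complete bipartite graph `K_{2,3}`. -/
def K23 : SimpleGraph (Fin 2 ⊕ Fin 3) := completeBipartiteGraph (Fin 2) (Fin 3)

/-- The graph `A`: a cycle `a₁a₂a₃a₄a₅a₆a₁` plus the edges `a₁a₃`, `a₃a₅`, `a₅a₁`. -/
def graphA : SimpleGraph (Fin 6) :=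
  SimpleGraph.fromEdgeSet
    {s(0, 1), s(1, 2), s(2, 3), s(3, 4), s(4, 5), s(5, 0), s(0, 2), s(2, 4), s(4, 0)}

/-- The graph `C_{3,2}`: two disjoint triangles. -/
def C32 : SimpleGraph (Fin 2 × Fin 3) :=
  SimpleGraph.fromRel (fun u v => u.1 = v.1)

/-- A graph is outerplanar iff it has no `K₄` minor and no `K_{2,3}` minor
(the classical characterization of outerplanarity). -/
def Outerplanar {V : Type*} (G : SimpleGraph V) : Prop :=
  ¬ IsMinor K4 G ∧ ¬ IsMinor K23 G

/-- `G` is `k`-connected: it has more than `k` vertices and deleting fewer than `k`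
vertices leaves a connected graph. -/
def IsKConnected {V : Type*} [Fintype V] (k : ℕ) (G : SimpleGraph V) : Prop :=
  k + 1 ≤ Fintype.card V ∧
  ∀ S : Finset V, S.card < k → (G.induce ((↑S : Set V)ᶜ)).Connected

/-- `(Tr, X)` is a tree-decomposition of `G`: `Tr` is a tree, the bags `X t` cover all
vertices and edges (W1), and whenever `t₂` lies on the path of `Tr` between `t₁` and `t₃`
we have `X t₁ ∩ X t₃ ⊆ X t₂` (W2). -/
def IsTreeDecomp {V T : Type*} (G : SimpleGraph V) (Tr : SimpleGraph T) (X : T → Finset V) :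
    Prop :=
  Tr.IsTree ∧
  (∀ v : V, ∃ t, v ∈ X t) ∧
  (∀ u v : V, G.Adj u v → ∃ t, u ∈ X t ∧ v ∈ X t) ∧
  (∀ (t₁ t₂ t₃ : T) (p : Tr.Walk t₁ t₃), p.IsPath → t₂ ∈ p.support →
    ∀ v : V, v ∈ X t₁ → v ∈ X t₃ → v ∈ X t₂)

/-- A path-decomposition of `G`, with bags indexed by `Fin n`. -/
def IsPathDecomp {V : Type*} (G : SimpleGraph V) {n : ℕ} (X : Fin n → Finset V) : Prop :=
  (∀ v : V, ∃ i, v ∈ X i) ∧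
  (∀ u v : V, G.Adj u v → ∃ i, u ∈ X i ∧ v ∈ X i) ∧
  (∀ i j k : Fin n, i ≤ j → j ≤ k → ∀ v : V, v ∈ X i → v ∈ X k → v ∈ X j)

/-- The path-width of a finite graph: the least `w` such that `G` has a
path-decomposition all of whose bags have at most `w + 1` vertices. -/
noncomputable def pathwidth {V : Type*} [Fintype V] (G : SimpleGraph V) : ℕ :=
  sInf {w | ∃ (n : ℕ) (X : Fin n → Finset V), IsPathDecomp G X ∧ ∀ i, (X i).card ≤ w + 1}

/-- The tree-width of a finite graph: the least `w` such that `G` has a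
tree-decomposition all of whose bags have at most `w + 1` vertices. -/
noncomputable def treewidth {V : Type*} [Fintype V] (G : SimpleGraph V) : ℕ :=
  sInf {w | ∃ (T : Type) (_ : Fintype T) (Tr : SimpleGraph T) (X : T → Finset V),
    IsTreeDecomp G Tr X ∧ ∀ t, (X t).card ≤ w + 1}

/-- Vertices of the binary tree `CT_h`: paths from the root, recorded as reversed
lists of left/right moves, of length at most `h`. -/
abbrev CTVert (h : ℕ) := {l : List Bool // l.length ≤ h}

/-- The binary tree `CT_h` of height `h`. -/
def CTgraph (h : ℕ) : SimpleGraph (CTVert h) :=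
  SimpleGraph.fromEdgeSet
    {e | ∃ (b : Bool) (σ : List Bool) (hσ : σ.length < h),
      e = s((⟨σ, le_of_lt hσ⟩ : CTVert h), (⟨b :: σ, by simpa using hσ⟩ : CTVert h))}

/-- The graph `𝒫_k`: the binary tree `CT_k` together with one extra vertex (`none`)
adjacent to every leaf of `CT_k`. -/
def Pgraph (k : ℕ) : SimpleGraph (Option (CTVert k)) :=
  SimpleGraph.fromEdgeSet
    ({e | ∃ (b : Bool) (σ : List Bool) (hσ : σ.length < k),
        e = s(some (⟨σ, le_of_lt hσ⟩ : CTVert k), some (⟨b :: σ, by simpa using hσ⟩ : CTVert k))} ∪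
     {e | ∃ l : CTVert k, l.1.length = k ∧ e = s(none, some l)})

/-- Vertices of `𝒬_k`: the two base vertices of the root triangle (`Sum.inl false` and
`Sum.inl true`), together with one apex vertex for each node of the complete binary tree
of depth `< k` (recorded as a reversed list of moves). -/
abbrev QVert (k : ℕ) := Bool ⊕ {l : List Bool // l.length < k}

/-- The two ends of the base edge of the copy of the triangle at node `σ` of `𝒬_k`. -/
def qbase (k : ℕ) : List Bool → QVert k × QVert k
  | [] => (Sum.inl false, Sum.inl true)
  | b :: σ =>
      ((if b then (qbase k σ).2 else (qbase k σ).1),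
        if h : σ.length < k then Sum.inr ⟨σ, h⟩ else Sum.inl false)

/-- The graph `𝒬_k`, built from triangles as in the recursive definition: the triangle at
node `σ` consists of the base edge `qbase k σ` together with the apex vertex `Sum.inr σ`;
the base edge of `𝒬_k` is `s(Sum.inl false, Sum.inl true)`. -/
def Qgraph (k : ℕ) : SimpleGraph (QVert k) :=
  SimpleGraph.fromEdgeSet
    ({s(Sum.inl false, Sum.inl true)} ∪
     {e | ∃ (σ : List Bool) (h : σ.length < k),
        e = s(Sum.inr ⟨σ, h⟩, (qbase k σ).1) ∨ e = s(Sum.inr ⟨σ, h⟩, (qbase k σ).2)})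

/-- The minor vertices of the tree `T_h` (one for each string of length `≤ h`). -/
abbrev MVert (h : ℕ) := {l : List Bool // l.length ≤ h}

/-- The major vertices of the tree `T_h` (one for each string of length `≤ h - 1`). -/
abbrev JVert (h : ℕ) := {l : List Bool // l.length + 1 ≤ h}

/-- Vertices of the tree `T_h` (obtained from `CT_h` by subdividing every edge not incident
with a degree-one vertex and adding the minor root). -/
abbrev TVert (h : ℕ) := MVert h ⊕ JVert h

/-- The tree `T_h`: each major vertex `σ` is adjacent to the minor vertices `σ` (its parent),
`false :: σ` (its left neighbor) and `true :: σ` (its right neighbor). -/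
def Tgraph (h : ℕ) : SimpleGraph (TVert h) :=
  SimpleGraph.fromEdgeSet
    {e | ∃ (σ : List Bool) (hσ : σ.length + 1 ≤ h),
      e = s(Sum.inr ⟨σ, hσ⟩, Sum.inl ⟨σ, Nat.le_of_succ_le hσ⟩) ∨
      ∃ b : Bool, e = s(Sum.inr ⟨σ, hσ⟩, Sum.inl ⟨b :: σ, by simpa using hσ⟩)}

/-- A homeomorphic embedding of `TA` into `TB`: an injection such that for any two edges of
`TA` sharing an end `t`, the corresponding paths of `TB` are edge-disjoint. -/
def IsHomeoEmb {A B : Type*} (TA : SimpleGraph A) (TB : SimpleGraph B) (η : A → B) : Prop :=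
  Function.Injective η ∧
  ∀ ⦃t t₁ t₂ : A⦄, TA.Adj t t₁ → TA.Adj t t₂ → t₁ ≠ t₂ →
    ∀ (p₁ : TB.Walk (η t) (η t₁)) (p₂ : TB.Walk (η t) (η t₂)),
      p₁.IsPath → p₂.IsPath → ∀ e ∈ p₁.edges, e ∉ p₂.edges

/-- `v` lies in the span of `η`: it lies on a path of `TB` between two vertices in the
image of `η`. -/
def inSpan {A B : Type*} (TB : SimpleGraph B) (η : A → B) (v : B) : Prop :=
  ∃ (a₁ a₂ : A) (p : TB.Walk (η a₁) (η a₂)), p.IsPath ∧ v ∈ p.support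

/-- A cascade of height `h` and size `s` in the tree-decomposition `(Tr, X)`:
a homeomorphic embedding of `T_h` with `|X (η t)| = s` for every minor vertex `t`
and `|X t| ≥ s` for every `t` in the span. -/
def IsCascade {V T : Type*} (Tr : SimpleGraph T) (X : T → Finset V) (h s : ℕ)
    (η : TVert h → T) : Prop :=
  IsHomeoEmb (Tgraph h) Tr η ∧
  (∀ l : MVert h, (X (η (Sum.inl l))).card = s) ∧
  (∀ t : T, inSpan Tr η t → s ≤ (X t).card)

/-- An injective cascade with common intersection set `I`. -/
def IsInjectiveCascade {V T : Type*} (Tr : SimpleGraph T) (X : T → Finset V) (h s : ℕ)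
    (η : TVert h → T) (I : Finset V) : Prop :=
  IsCascade Tr X h s η ∧ I.card < s ∧
  ∀ t t' : TVert h, t ≠ t' → ((X (η t) : Set V) ∩ (X (η t') : Set V)) = (I : Set V)

/-- A family of `s` disjoint paths in `G \ I` (a linkage). -/
def IsLinkage {V : Type*} (G : SimpleGraph V) (I : Finset V) {s : ℕ} {x y : Fin s → V}
    (P : ∀ i : Fin s, G.Walk (x i) (y i)) : Prop :=
  (∀ i, (P i).IsPath) ∧
  (∀ i, ∀ v ∈ (P i).support, v ∉ I) ∧
  (∀ i j, i ≠ j → ∀ v ∈ (P i).support, v ∉ (P j).support)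

/-- An ordered cascade: an injective cascade of size `s + |I|` with common intersection set
`I`, together with orderings `ξ t : Fin s → X (η t) \ I` of the bags at minor vertices, such
that at every major vertex there are left and right linkages connecting corresponding
vertices. -/
def IsOrderedCascade {V T : Type*} (G : SimpleGraph V) (Tr : SimpleGraph T)
    (X : T → Finset V) (h s : ℕ) (η : TVert h → T) (I : Finset V)
    (ξ : MVert h → Fin s → V) : Prop :=
  IsInjectiveCascade Tr X h (s + I.card) η I ∧
  (∀ t : MVert h, Function.Injective (ξ t) ∧
    Set.range (ξ t) = (X (η (Sum.inl t)) : Set V) \ (I : Set V)) ∧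
  ∀ (σ : List Bool) (hσ : σ.length + 1 ≤ h),
    (∃ P : ∀ i : Fin s,
        G.Walk (ξ ⟨σ, Nat.le_of_succ_le hσ⟩ i) (ξ ⟨false :: σ, by simpa using hσ⟩ i),
      IsLinkage G I P) ∧
    (∃ Q : ∀ i : Fin s,
        G.Walk (ξ ⟨σ, Nat.le_of_succ_le hσ⟩ i) (ξ ⟨true :: σ, by simpa using hσ⟩ i),
      IsLinkage G I Q)

/-- The vertex set of the `η`-torso at the major vertex `σ` of `T_h`: the union of the bags
`X t - I` over all `t` such that the path in `Tr` from `t` to `η σ` contains none of the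
images of the three minor neighbors of `σ` as an internal vertex. -/
def torsoSet {V T : Type*} (Tr : SimpleGraph T) (X : T → Finset V) {h : ℕ}
    (η : TVert h → T) (I : Finset V) (σ : List Bool) (hσ : σ.length + 1 ≤ h) : Set V :=
  {v | v ∉ I ∧ ∃ t : T,
    (∀ p : Tr.Walk t (η (Sum.inr ⟨σ, hσ⟩)), p.IsPath →
      ∀ u : T,
        (u = η (Sum.inl ⟨σ, Nat.le_of_succ_le hσ⟩) ∨
         u = η (Sum.inl ⟨false :: σ, by simpa using hσ⟩) ∨
         u = η (Sum.inl ⟨true :: σ, by simpa using hσ⟩)) →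
        u ∈ p.support → u = t ∨ u = η (Sum.inr ⟨σ, hσ⟩)) ∧
    v ∈ X t}

/-- `H` is a tripod in `G` with all vertices in `S`, center `c` and feet `f₁, f₂, f₃`:
the union of three paths from `c` to the feet, pairwise disjoint except for `c`,
at least two of which have length at least one. -/
def IsTripodOn {V : Type*} (G : SimpleGraph V) (S : Set V) (H : G.Subgraph)
    (c f₁ f₂ f₃ : V) : Prop :=
  ∃ (W₁ : G.Walk c f₁) (W₂ : G.Walk c f₂) (W₃ : G.Walk c f₃),
    W₁.IsPath ∧ W₂.IsPath ∧ W₃.IsPath ∧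
    (∀ v ∈ W₁.support, v ∈ S) ∧ (∀ v ∈ W₂.support, v ∈ S) ∧ (∀ v ∈ W₃.support, v ∈ S) ∧
    (∀ v, v ∈ W₁.support → v ∈ W₂.support → v = c) ∧
    (∀ v, v ∈ W₁.support → v ∈ W₃.support → v = c) ∧
    (∀ v, v ∈ W₂.support → v ∈ W₃.support → v = c) ∧
    ((1 ≤ W₁.length ∧ 1 ≤ W₂.length) ∨ (1 ≤ W₁.length ∧ 1 ≤ W₃.length) ∨
      (1 ≤ W₂.length ∧ 1 ≤ W₃.length)) ∧
    H = W₁.toSubgraph ⊔ W₂.toSubgraph ⊔ W₃.toSubgraph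

/-- The major vertex `σ` has property `A_{ij}` in the ordered cascade `η` with orderings
`ξ`: there are two disjoint tripods in the `η`-torso at `σ`, with feet as prescribed. -/
def HasPropA {V T : Type*} (G : SimpleGraph V) (Tr : SimpleGraph T) (X : T → Finset V)
    {h s : ℕ} (η : TVert h → T) (I : Finset V) (ξ : MVert h → Fin s → V)
    (σ : List Bool) (hσ : σ.length + 1 ≤ h) (i j : Fin s) : Prop :=
  ∃ (Li Lj : G.Subgraph) (ci cj : V),
    (∃ m₂ m₃ : Fin s, (m₂ = i ∨ m₂ = j) ∧ (m₃ = i ∨ m₃ = j) ∧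
      IsTripodOn G (torsoSet Tr X η I σ hσ) Li ci
        (ξ ⟨σ, Nat.le_of_succ_le hσ⟩ i)
        (ξ ⟨false :: σ, by simpa using hσ⟩ m₂)
        (ξ ⟨true :: σ, by simpa using hσ⟩ m₃)) ∧
    (∃ m₂ m₃ : Fin s, (m₂ = i ∨ m₂ = j) ∧ (m₃ = i ∨ m₃ = j) ∧
      IsTripodOn G (torsoSet Tr X η I σ hσ) Lj cj
        (ξ ⟨σ, Nat.le_of_succ_le hσ⟩ j)
        (ξ ⟨false :: σ, by simpa using hσ⟩ m₂)
        (ξ ⟨true :: σ, by simpa using hσ⟩ m₃)) ∧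
    Disjoint Li.verts Lj.verts

/-- The major vertex `σ` has property `B_{ij}`: there are two tripods `L_i`, `L_j` in the
`η`-torso at `σ`, with feet `v_{m,1}, v_{m,2}, v_{m,3}` where `{v_{i,y}, v_{j,y}}` equals
`{ξ_{t_y} i, ξ_{t_y} j}` for each `y`, which intersect exactly in a path that is the
intersection of the branch of `L_i` to `v_{i,3}` and the branch of `L_j` to `v_{j,2}`,
and which avoids both centers. -/
def HasPropB {V T : Type*} (G : SimpleGraph V) (Tr : SimpleGraph T) (X : T → Finset V)
    {h s : ℕ} (η : TVert h → T) (I : Finset V) (ξ : MVert h → Fin s → V)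
    (σ : List Bool) (hσ : σ.length + 1 ≤ h) (i j : Fin s) : Prop :=
  ∃ (vi vj : Fin 3 → V) (ci cj : V)
    (Wi : ∀ y : Fin 3, G.Walk ci (vi y)) (Wj : ∀ y : Fin 3, G.Walk cj (vj y)),
    (∀ y : Fin 3, ({vi y, vj y} : Set V) =
      {(![ξ ⟨σ, Nat.le_of_succ_le hσ⟩,
          ξ ⟨false :: σ, by simpa using hσ⟩,
          ξ ⟨true :: σ, by simpa using hσ⟩] : Fin 3 → Fin s → V) y i,
       (![ξ ⟨σ, Nat.le_of_succ_le hσ⟩,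
          ξ ⟨false :: σ, by simpa using hσ⟩,
          ξ ⟨true :: σ, by simpa using hσ⟩] : Fin 3 → Fin s → V) y j}) ∧
    (∀ y, (Wi y).IsPath) ∧ (∀ y, (Wj y).IsPath) ∧
    (∀ y, ∀ v ∈ (Wi y).support, v ∈ torsoSet Tr X η I σ hσ) ∧
    (∀ y, ∀ v ∈ (Wj y).support, v ∈ torsoSet Tr X η I σ hσ) ∧
    (∀ y y' : Fin 3, y ≠ y' → ∀ v, v ∈ (Wi y).support → v ∈ (Wi y').support → v = ci) ∧
    (∀ y y' : Fin 3, y ≠ y' → ∀ v, v ∈ (Wj y).support → v ∈ (Wj y').support → v = cj) ∧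
    ((1 ≤ (Wi 0).length ∧ 1 ≤ (Wi 1).length) ∨ (1 ≤ (Wi 0).length ∧ 1 ≤ (Wi 2).length) ∨
      (1 ≤ (Wi 1).length ∧ 1 ≤ (Wi 2).length)) ∧
    ((1 ≤ (Wj 0).length ∧ 1 ≤ (Wj 1).length) ∨ (1 ≤ (Wj 0).length ∧ 1 ≤ (Wj 2).length) ∨
      (1 ≤ (Wj 1).length ∧ 1 ≤ (Wj 2).length)) ∧
    (((Wi 0).toSubgraph ⊔ (Wi 1).toSubgraph ⊔ (Wi 2).toSubgraph) ⊓
      ((Wj 0).toSubgraph ⊔ (Wj 1).toSubgraph ⊔ (Wj 2).toSubgraph)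
        = (Wi 2).toSubgraph ⊓ (Wj 1).toSubgraph) ∧
    ∃ (x y : V) (p : G.Walk x y), p.IsPath ∧
      (Wi 2).toSubgraph ⊓ (Wj 1).toSubgraph = p.toSubgraph ∧
      ci ∉ p.support ∧ cj ∉ p.support

/-- The major vertex `σ` has property `AB_{ij}`: in the `η`-torso at `σ` there are disjoint
paths `L_i, L_j` from `ξ_{t₁}(m)` to `ξ_{t₂}(m)` and disjoint paths `R_i, R_j` from
`ξ_{t₁}(m)` to `ξ_{t₃}(m)`, for `m ∈ {i, j}`. -/
def HasPropAB {V T : Type*} (G : SimpleGraph V) (Tr : SimpleGraph T) (X : T → Finset V)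
    {h s : ℕ} (η : TVert h → T) (I : Finset V) (ξ : MVert h → Fin s → V)
    (σ : List Bool) (hσ : σ.length + 1 ≤ h) (i j : Fin s) : Prop :=
  ∃ (Li : G.Walk (ξ ⟨σ, Nat.le_of_succ_le hσ⟩ i) (ξ ⟨false :: σ, by simpa using hσ⟩ i))
    (Lj : G.Walk (ξ ⟨σ, Nat.le_of_succ_le hσ⟩ j) (ξ ⟨false :: σ, by simpa using hσ⟩ j))
    (Ri : G.Walk (ξ ⟨σ, Nat.le_of_succ_le hσ⟩ i) (ξ ⟨true :: σ, by simpa using hσ⟩ i))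
    (Rj : G.Walk (ξ ⟨σ, Nat.le_of_succ_le hσ⟩ j) (ξ ⟨true :: σ, by simpa using hσ⟩ j)),
    Li.IsPath ∧ Lj.IsPath ∧ Ri.IsPath ∧ Rj.IsPath ∧
    (∀ v ∈ Li.support, v ∈ torsoSet Tr X η I σ hσ) ∧
    (∀ v ∈ Lj.support, v ∈ torsoSet Tr X η I σ hσ) ∧
    (∀ v ∈ Ri.support, v ∈ torsoSet Tr X η I σ hσ) ∧
    (∀ v ∈ Rj.support, v ∈ torsoSet Tr X η I σ hσ) ∧
    (∀ v ∈ Li.support, v ∉ Lj.support) ∧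
    (∀ v ∈ Ri.support, v ∉ Rj.support)

/-- A monotone homeomorphic embedding `T_a ↪ T_h`: the minor root maps to the minor root,
and for every major vertex with trinity `(t₁, t₂, t₃)`, the images of `t₂` and `t₃` are the
left and right neighbors of the (major) image of the vertex. -/
def IsMonotoneEmb (a h : ℕ) (γ : TVert a → TVert h) : Prop :=
  IsHomeoEmb (Tgraph a) (Tgraph h) γ ∧
  γ (Sum.inl ⟨[], Nat.zero_le a⟩) = Sum.inl ⟨[], Nat.zero_le h⟩ ∧
  ∀ (σ : List Bool) (hσ : σ.length + 1 ≤ a),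
    ∃ (τ : List Bool) (hτ : τ.length + 1 ≤ h),
      γ (Sum.inr ⟨σ, hσ⟩) = Sum.inr ⟨τ, hτ⟩ ∧
      γ (Sum.inl ⟨false :: σ, by simpa using hσ⟩) = Sum.inl ⟨false :: τ, by simpa using hτ⟩ ∧
      γ (Sum.inl ⟨true :: σ, by simpa using hσ⟩) = Sum.inl ⟨true :: τ, by simpa using hτ⟩

namespace PAB
variable {V : Type} {G : SimpleGraph V}

/-- connected vertex set -/
def Cn (G : SimpleGraph V) (A : Set V) : Prop :=
  ∀ u ∈ A, ∀ v ∈ A, ∃ p : G.Walk u v, p.IsPath ∧ ∀ w ∈ p.support, w ∈ A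

theorem Cn.mk {A : Set V} (h : ∀ u ∈ A, ∀ v ∈ A, ∃ p : G.Walk u v, ∀ w ∈ p.support, w ∈ A) :
    Cn G A := by
  classical
  intro u hu v hv
  obtain ⟨p, hp⟩ := h u hu v hv
  exact ⟨p.bypass, p.bypass_isPath, fun w hw => hp w (p.support_bypass_subset_support hw)⟩

theorem Cn.union {A B : Set V} (hA : Cn G A) (hB : Cn G B) {a b : V} (ha : a ∈ A) (hb : b ∈ B)
    (hab : G.Adj a b) : Cn G (A ∪ B) := by
  apply Cn.mk
  rintro u (hu | hu) v (hv | hv)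
  · obtain ⟨p, -, hp⟩ := hA u hu v hv
    exact ⟨p, fun w hw => Or.inl (hp w hw)⟩
  · obtain ⟨p, -, hp⟩ := hA u hu a ha
    obtain ⟨q, -, hq⟩ := hB b hb v hv
    refine ⟨p.append (.cons hab q), fun w hw => ?_⟩
    rw [Walk.mem_support_append_iff, Walk.support_cons, List.mem_cons] at hw
    rcases hw with h | rfl | h
    · exact Or.inl (hp _ h)
    · exact Or.inl ha
    · exact Or.inr (hq _ h)
  · obtain ⟨p, -, hp⟩ := hB u hu b hb
    obtain ⟨q, -, hq⟩ := hA a ha v hv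
    refine ⟨p.append (.cons hab.symm q), fun w hw => ?_⟩
    rw [Walk.mem_support_append_iff, Walk.support_cons, List.mem_cons] at hw
    rcases hw with h | rfl | h
    · exact Or.inr (hp _ h)
    · exact Or.inr hb
    · exact Or.inl (hq _ h)
  · obtain ⟨p, -, hp⟩ := hB u hu v hv
    exact ⟨p, fun w hw => Or.inr (hp w hw)⟩

theorem Cn.single (v : V) : Cn G {v} := by
  rintro u rfl w rfl
  exact ⟨.nil, by simp, by simp⟩

theorem Cn.support {u v : V} (p : G.Walk u v) : Cn G {w | w ∈ p.support} := by
  classical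
  apply Cn.mk
  intro a ha b hb
  refine ⟨(p.takeUntil a ha).reverse.append (p.takeUntil b hb), fun w hw => ?_⟩
  rw [Walk.mem_support_append_iff, Walk.support_reverse, List.mem_reverse] at hw
  rcases hw with h | h
  · exact p.support_takeUntil_subset_support _ h
  · exact p.support_takeUntil_subset_support _ h

theorem Cn.insert' {A : Set V} (hA : Cn G A) {a z : V} (ha : a ∈ A) (h : G.Adj a z) :
    Cn G (A ∪ {z}) := hA.union (Cn.single z) ha rfl h

theorem isPath_append {u v w : V} {p : G.Walk u v} {q : G.Walk v w} (hp : p.IsPath)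
    (hq : q.IsPath) (h : ∀ x ∈ p.support, x ∈ q.support → x = v) : (p.append q).IsPath := by
  induction p with
  | nil => simpa using hq
  | cons hadj p ih =>
    rw [Walk.cons_isPath_iff] at hp
    rw [Walk.cons_append, Walk.cons_isPath_iff]
    refine ⟨ih hp.1 hq fun x hx hx' => h x (by simp [hx]) hx', ?_⟩
    rw [Walk.mem_support_append_iff]
    rintro (h1 | h1)
    · exact hp.2 h1
    · have := h _ (by simp) h1
      subst this
      exact hp.2 (by simp)

/-- first hit of a set -/
theorem firstHit {u v : V} (p : G.Walk u v) (hp : p.IsPath) (D : Set V)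
    (h : ∃ x ∈ p.support, x ∈ D) :
    ∃ (m : V) (q : G.Walk u m) (r : G.Walk m v), m ∈ D ∧ p = q.append r ∧ q.IsPath ∧ r.IsPath ∧
      (∀ x ∈ q.support, x ∈ D → x = m) ∧ (∀ x ∈ q.support, x ∈ r.support → x = m) := by
  induction p with
  | nil => 
    obtain ⟨x, hx, hD⟩ := h
    simp at hx; subst hx
    exact ⟨_, .nil, .nil, hD, by simp, by simp, by simp, by simp, by simp⟩
  | @cons a b c hadj p ih =>
    by_cases ha : a ∈ D
    · exact ⟨a, .nil, .cons hadj p, ha, by simp, by simp, hp, by simp, by simp⟩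
    · rw [Walk.cons_isPath_iff] at hp
      obtain ⟨x, hx, hD⟩ := h
      have hx' : x ∈ p.support := by
        rw [Walk.support_cons, List.mem_cons] at hx
        rcases hx with rfl | hx
        · exact absurd hD ha
        · exact hx
      obtain ⟨m, q, r, hm, rfl, hq, hr, h1, h2⟩ := ih hp.1 ⟨x, hx', hD⟩
      have hn := hp.2
      rw [Walk.mem_support_append_iff] at hn
      push Not at hn
      refine ⟨m, .cons hadj q, r, hm, by simp, by simp [Walk.cons_isPath_iff, hq, hn.1], hr, ?_, ?_⟩
      · intro y hy hyD
        rw [Walk.support_cons, List.mem_cons] at hy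
        rcases hy with rfl | hy
        · exact absurd hyD ha
        · exact h1 y hy hyD
      · intro y hy hyD
        rw [Walk.support_cons, List.mem_cons] at hy
        rcases hy with rfl | hy
        · exact absurd hyD hn.2
        · exact h2 y hy hyD

theorem splitAt {u v m : V} (p : G.Walk u v) (hp : p.IsPath) (h : m ∈ p.support) :
    ∃ (q : G.Walk u m) (r : G.Walk m v), p = q.append r ∧ q.IsPath ∧ r.IsPath ∧
      (∀ x ∈ q.support, x ∈ r.support → x = m) := by
  obtain ⟨m', q, r, hm, h1, h2, h3, -, h4⟩ := firstHit p hp {m} ⟨m, h, rfl⟩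
  obtain rfl : m' = m := hm
  exact ⟨q, r, h1, h2, h3, h4⟩

theorem subpath {u v a b : V} (p : G.Walk u v) (hp : p.IsPath) (ha : a ∈ p.support)
    (hb : b ∈ p.support) :
    ∃ q : G.Walk a b, q.IsPath ∧ q.toSubgraph ≤ p.toSubgraph := by
  obtain ⟨q, r, rfl, hq, hr, -⟩ := splitAt p hp ha
  rw [Walk.mem_support_append_iff] at hb
  rcases hb with hb | hb
  · obtain ⟨q1, q2, rfl, h1, h2, -⟩ := splitAt q hq hb
    refine ⟨q2.reverse, h2.reverse, ?_⟩
    simp only [Walk.toSubgraph_append, Walk.toSubgraph_reverse]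
    exact le_sup_of_le_left le_sup_right
  · obtain ⟨q1, q2, rfl, h1, h2, -⟩ := splitAt r hr hb
    refine ⟨q1, h1, ?_⟩
    simp only [Walk.toSubgraph_append]
    exact le_sup_of_le_right le_sup_left

theorem tripod {A : Set V} (hA : Cn G A) {f g h : V} (hf : f ∈ A) (hg : g ∈ A) (hh : h ∈ A) :
    ∃ (c : V) (W₁ : G.Walk c f) (W₂ : G.Walk c g) (W₃ : G.Walk c h),
    W₁.IsPath ∧ W₂.IsPath ∧ W₃.IsPath ∧
    (∀ v ∈ W₁.support, v ∈ A) ∧ (∀ v ∈ W₂.support, v ∈ A) ∧ (∀ v ∈ W₃.support, v ∈ A) ∧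
    (∀ v, v ∈ W₁.support → v ∈ W₂.support → v = c) ∧
    (∀ v, v ∈ W₁.support → v ∈ W₃.support → v = c) ∧
    (∀ v, v ∈ W₂.support → v ∈ W₃.support → v = c) := by
  obtain ⟨p, hp, hpA⟩ := hA f hf g hg
  obtain ⟨q, hq, hqA⟩ := hA h hh f hf
  obtain ⟨m, q1, q2, hm, rfl, hq1, -, h1, -⟩ := firstHit q hq {w | w ∈ p.support}
    ⟨f, by simp, by simp⟩
  obtain ⟨p1, p2, rfl, hp1, hp2, h2⟩ := splitAt p hp hm
  refine ⟨m, p1.reverse, p2, q1.reverse, hp1.reverse, hp2, hq1.reverse, ?_, ?_, ?_, ?_, ?_, ?_⟩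
  · intro v hv
    exact hpA v (by simp at hv; simp [hv])
  · intro v hv
    exact hpA v (by simp [hv])
  · intro v hv
    exact hqA v (by simp at hv; simp [hv])
  · intro v hv hv'
    simp at hv
    exact h2 v hv hv'
  · intro v hv hv'
    simp at hv hv'
    exact h1 v hv' (by simp [hv])
  · intro v hv hv'
    simp at hv'
    exact h1 v hv' (by simp [hv])

theorem lens {c f g h : V} (W₁ : G.Walk c f) (W₂ : G.Walk c g) (W₃ : G.Walk c h)
    (h1 : f ≠ g) (h2 : f ≠ h) (h3 : g ≠ h) :
    ((1 ≤ W₁.length ∧ 1 ≤ W₂.length) ∨ (1 ≤ W₁.length ∧ 1 ≤ W₃.length) ∨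
      (1 ≤ W₂.length ∧ 1 ≤ W₃.length)) := by
  have k1 : W₁.length = 0 → c = f := Walk.eq_of_length_eq_zero
  have k2 : W₂.length = 0 → c = g := Walk.eq_of_length_eq_zero
  have k3 : W₃.length = 0 → c = h := Walk.eq_of_length_eq_zero
  rcases Nat.eq_zero_or_pos W₁.length with e1 | e1 <;>
  rcases Nat.eq_zero_or_pos W₂.length with e2 | e2 <;>
  rcases Nat.eq_zero_or_pos W₃.length with e3 | e3 <;> grind

/-- splitting with an edge -/
theorem splitEdge {u v z : V} (p : G.Walk u v) (hp : p.IsPath) (hz : z ∈ p.support) (hzv : z ≠ v) :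
    ∃ (z' : V) (q : G.Walk u z) (t : G.Walk z' v), G.Adj z z' ∧ q.IsPath ∧
      (∀ x, x ∈ p.support ↔ x ∈ q.support ∨ x ∈ t.support) ∧
      (∀ x ∈ q.support, x ∉ t.support) := by
  obtain ⟨q, r, rfl, hq, hr, h⟩ := splitAt p hp hz
  cases r with
  | nil => exact absurd rfl hzv
  | cons hadj t =>
    rw [Walk.cons_isPath_iff] at hr
    refine ⟨_, q, t, hadj, hq, ?_, ?_⟩
    · intro x
      rw [Walk.mem_support_append_iff, Walk.support_cons, List.mem_cons]
      constructor
      · rintro (h | rfl | h)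
        · exact Or.inl h
        · exact Or.inl (by simp)
        · exact Or.inr h
      · rintro (h | h)
        · exact Or.inl h
        · exact Or.inr (Or.inr h)
    · intro x hx hx'
      have := h x hx (by simp [hx'])
      subst this
      exact hr.2 hx'

theorem splitOrder {u v x y : V} (p : G.Walk u v) (hp : p.IsPath) (hx : x ∈ p.support)
    (hy : y ∈ p.support) (hxy : x ≠ y) :
    (∃ (z' : V) (q : G.Walk u x) (t : G.Walk z' v), G.Adj x z' ∧ q.IsPath ∧
      (∀ w, w ∈ p.support ↔ w ∈ q.support ∨ w ∈ t.support) ∧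
      (∀ w ∈ q.support, w ∉ t.support) ∧ y ∈ t.support) ∨
    (∃ (z' : V) (q : G.Walk u y) (t : G.Walk z' v), G.Adj y z' ∧ q.IsPath ∧
      (∀ w, w ∈ p.support ↔ w ∈ q.support ∨ w ∈ t.support) ∧
      (∀ w ∈ q.support, w ∉ t.support) ∧ x ∈ t.support) := by
  obtain ⟨m, q, r, hm, rfl, hq, hr, h1, h2⟩ := firstHit p hp {x, y} ⟨x, hx, by simp⟩
  have key : ∀ n, n ≠ m → n ∈ (q.append r).support → (n = x ∨ n = y) → 
      (∃ (z' : V) (q' : G.Walk u m) (t : G.Walk z' v), G.Adj m z' ∧ q'.IsPath ∧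
      (∀ w, w ∈ (q.append r).support ↔ w ∈ q'.support ∨ w ∈ t.support) ∧
      (∀ w ∈ q'.support, w ∉ t.support) ∧ n ∈ t.support) := by
    intro n hnm hn hnx
    have hnq : n ∉ q.support := fun h => hnm (h1 n h hnx)
    cases r with
    | nil => simp at hn; exact absurd hn hnq
    | cons hadj t =>
      rw [Walk.cons_isPath_iff] at hr
      refine ⟨_, q, t, hadj, hq, ?_, ?_, ?_⟩
      · intro x
        rw [Walk.mem_support_append_iff, Walk.support_cons, List.mem_cons]
        constructor
        · rintro (h | rfl | h)
          · exact Or.inl h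
          · exact Or.inl (by simp)
          · exact Or.inr h
        · rintro (h | h)
          · exact Or.inl h
          · exact Or.inr (Or.inr h)
      · intro x hx hx'
        have := h2 x hx (by simp [hx'])
        subst this
        exact hr.2 hx'
      · rw [Walk.mem_support_append_iff, Walk.support_cons, List.mem_cons] at hn
        rcases hn with h | h | h
        · exact absurd h hnq
        · exact absurd h hnm
        · exact h
  rcases hm with rfl | hm
  · exact Or.inl (key y hxy.symm hy (Or.inr rfl))
  · obtain rfl : m = y := hm
    exact Or.inr (key x hxy hx (Or.inl rfl))

/-- `x` attached to `c` via the set `M`. -/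
def Att (G : SimpleGraph V) (x : V) (M : Set V) (c : V) : Prop :=
  (x = c ∧ M = ∅) ∨ (c ∈ M ∧ Cn G M ∧ ∃ m ∈ M, G.Adj x m)

theorem Att.union {x c : V} {M B : Set V} (h : Att G x M c) (hB : Cn G B) (hx : x ∈ B) :
    Cn G (B ∪ M) ∧ c ∈ B ∪ M := by
  rcases h with ⟨rfl, rfl⟩ | ⟨hc, hM, m, hm, hxm⟩
  · simpa using ⟨hB, hx⟩
  · exact ⟨hB.union hM hx hm hxm, Or.inr hc⟩

/-- first hit from the far end, as an attachment -/
theorem hitAtt {a c : V} (p : G.Walk a c) (hp : p.IsPath) (D : Set V)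
    (h : ∃ x ∈ p.support, x ∈ D) :
    ∃ (m : V) (M : Set V), m ∈ D ∧ m ∈ p.support ∧ (∀ x ∈ M, x ∈ p.support ∧ x ∉ D) ∧
      Att G m M c := by
  obtain ⟨m, q, r, hm, he, hq, -, h1, -⟩ := firstHit p.reverse hp.reverse D (by simpa using h)
  have hs : ∀ x ∈ q.support, x ∈ p.support := by
    intro x hx
    have : x ∈ p.reverse.support := by rw [he]; simp [hx]
    simpa using this
  have hq' := hq.reverse
  generalize hqr : q.reverse = qr at hq'
  have hs' : ∀ x, x ∈ q.support ↔ x ∈ qr.support := by intro x; rw [← hqr]; simp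
  cases qr with
  | nil => exact ⟨_, ∅, hm, hs _ (by simp), by simp, Or.inl ⟨rfl, rfl⟩⟩
  | cons hadj t =>
    rw [Walk.cons_isPath_iff] at hq'
    refine ⟨_, {w | w ∈ t.support}, hm, hs _ (by simp), ?_, Or.inr ⟨by simp, Cn.support t, _, by simp, hadj⟩⟩
    intro x hx
    have hx' : x ∈ q.support := (hs' x).2 (by simp at hx; simp [hx])
    refine ⟨hs x hx', fun hD => ?_⟩
    have := h1 x hx' hD
    subst this
    exact hq'.2 hx

theorem inf_path {P E p F K : G.Subgraph} {u u' : V} (hP : ∀ v ∈ P.verts, v ∉ K.verts)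
    (hE : ∀ v ∈ E.verts, v ∈ K.verts → v = u) (hF : ∀ v ∈ F.verts, v ∈ K.verts → v = u')
    (hu : u ∈ p.verts) (hu' : u' ∈ p.verts)
    (hp : p ≤ K) : (P ⊔ (E ⊔ (p ⊔ F))) ⊓ K = p := by
  apply le_antisymm
  · constructor
    · rintro v ⟨hv, hK⟩
      rcases hv with hv | hv | hv | hv
      · exact absurd hK (hP v hv)
      · rw [hE v hv hK]; exact hu
      · exact hv
      · rw [hF v hv hK]; exact hu'
    · rintro v w ⟨hv, hK⟩
      rcases hv with hv | hv | hv | hv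
      · exact absurd hK.fst_mem (hP v hv.fst_mem)
      · have := hE v hv.fst_mem hK.fst_mem
        have := hE w hv.snd_mem hK.snd_mem
        subst_vars
        exact absurd hK.ne (by simp)
      · exact hv
      · have := hF v hv.fst_mem hK.fst_mem
        have := hF w hv.snd_mem hK.snd_mem
        subst_vars
        exact absurd hK.ne (by simp)
  · refine le_inf ?_ hp
    exact le_sup_of_le_right (le_sup_of_le_right le_sup_left)


def OutA (G : SimpleGraph V) (S : Set V) (a₁ a₂ b₁ b₂ c c' : V) : Prop :=
  ∃ S₁ S₂ : Set V, Cn G S₁ ∧ Cn G S₂ ∧ (∀ v ∈ S₁, v ∈ S) ∧ (∀ v ∈ S₂, v ∈ S) ∧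
    (∀ v ∈ S₁, v ∉ S₂) ∧ a₁ ∈ S₁ ∧ b₁ ∈ S₁ ∧ a₂ ∈ S₂ ∧ b₂ ∈ S₂ ∧
    ((c ∈ S₁ ∧ c' ∈ S₂) ∨ (c' ∈ S₁ ∧ c ∈ S₂))

def PB (G : SimpleGraph V) (S : Set V) (a b c a' b' c' : V) : Prop :=
  ∃ (ci cj : V) (W0 : G.Walk ci a) (W1 : G.Walk ci b) (W2 : G.Walk ci c)
    (U0 : G.Walk cj a') (U1 : G.Walk cj b') (U2 : G.Walk cj c'),
    (W0.IsPath ∧ W1.IsPath ∧ W2.IsPath) ∧ (U0.IsPath ∧ U1.IsPath ∧ U2.IsPath) ∧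
    ((∀ v ∈ W0.support, v ∈ S) ∧ (∀ v ∈ W1.support, v ∈ S) ∧ (∀ v ∈ W2.support, v ∈ S)) ∧
    ((∀ v ∈ U0.support, v ∈ S) ∧ (∀ v ∈ U1.support, v ∈ S) ∧ (∀ v ∈ U2.support, v ∈ S)) ∧
    ((∀ v, v ∈ W0.support → v ∈ W1.support → v = ci) ∧
     (∀ v, v ∈ W0.support → v ∈ W2.support → v = ci) ∧
     (∀ v, v ∈ W1.support → v ∈ W2.support → v = ci)) ∧
    ((∀ v, v ∈ U0.support → v ∈ U1.support → v = cj) ∧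
     (∀ v, v ∈ U0.support → v ∈ U2.support → v = cj) ∧
     (∀ v, v ∈ U1.support → v ∈ U2.support → v = cj)) ∧
    ((W0.toSubgraph ⊔ W1.toSubgraph ⊔ W2.toSubgraph) ⊓
      (U0.toSubgraph ⊔ U1.toSubgraph ⊔ U2.toSubgraph) = W2.toSubgraph ⊓ U1.toSubgraph) ∧
    ∃ (x y : V) (p : G.Walk x y), p.IsPath ∧
      W2.toSubgraph ⊓ U1.toSubgraph = p.toSubgraph ∧ ci ∉ p.support ∧ cj ∉ p.support

theorem finalB {S S₁ S₂ K : Set V} (h1 : Cn G S₁) (h2 : Cn G S₂) (hK : Cn G K)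
    (s1 : ∀ v ∈ S₁, v ∈ S) (s2 : ∀ v ∈ S₂, v ∈ S) (sK : ∀ v ∈ K, v ∈ S)
    (d12 : ∀ v ∈ S₁, v ∉ S₂) (d1 : ∀ v ∈ S₁, v ∉ K) (d2 : ∀ v ∈ S₂, v ∉ K)
    {a₁ a₂ b₁ b₂ c c' x z w n : V} (ha2 : a₂ ∈ S₁) (hb2 : b₂ ∈ S₁) (hz : z ∈ S₁)
    (ha1 : a₁ ∈ S₂) (hc : c ∈ S₂) (hx : x ∈ S₂) (hb1 : b₁ ∈ K) (hc' : c' ∈ K)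
    (hw : w ∈ K) (hn : n ∈ K) (hzn : G.Adj z n) (hxw : G.Adj x w) :
    OutA G S a₁ a₂ b₁ b₂ c c' ∨ PB G S a₂ b₂ c' a₁ b₁ c := by
  obtain ⟨D, hD, hDK⟩ := hK w hw b₁ hb1
  obtain ⟨W, hW, hWK⟩ := hK n hn c' hc'
  by_cases hdis : ∃ v ∈ W.support, v ∈ {v | v ∈ D.support}
  swap
  · left
    push Not at hdis
    refine ⟨S₂ ∪ {v | v ∈ D.support}, S₁ ∪ {v | v ∈ W.support},
      h2.union (Cn.support D) hx (by simp) hxw, h1.union (Cn.support W) hz (by simp) hzn,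
      ?_, ?_, ?_, Or.inl ha1, Or.inr (by simp), Or.inl ha2, Or.inl hb2,
      Or.inl ⟨Or.inl hc, Or.inr (by simp)⟩⟩
    · rintro v (h | h)
      · exact s2 v h
      · exact sK v (hDK v h)
    · rintro v (h | h)
      · exact s1 v h
      · exact sK v (hWK v h)
    · rintro v (h | h) (h' | h')
      · exact d12 v h' h
      · exact d2 v h (hWK v h')
      · exact d1 v h' (hDK v h)
      · exact hdis v h' h
  right
  obtain ⟨u, W1, W', hu, rfl, hW1, hW', hW1D, hW1W'⟩ := firstHit W hW _ hdis
  obtain ⟨u', F', F'', hu', heF, hF', -, hF'D, -⟩ :=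
    firstHit W'.reverse hW'.reverse {v | v ∈ D.support} ⟨u, by simp, hu⟩
  have hF'W : ∀ v ∈ F'.support, v ∈ W'.support := by
    intro v hv
    have : v ∈ W'.reverse.support := by rw [heF]; simp [hv]
    simpa using this
  obtain ⟨p, hp, hpD⟩ := subpath D hD hu hu'
  have hpDs : ∀ v ∈ p.support, v ∈ D.support := fun v hv => by
    have := hpD.1 (by simpa using hv : v ∈ p.toSubgraph.verts)
    simpa using this
  obtain ⟨ci, T0, T1, T2, t0, t1, t2, t0s, t1s, t2s, t01, t02, t12⟩ := tripod h1 ha2 hb2 hz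
  obtain ⟨cj, R0, R1, R2, r0, r1, r2, r0s, r1s, r2s, r01, r02, r12⟩ := tripod h2 ha1 hx hc
  have W1K : ∀ v ∈ W1.support, v ∈ K := fun v hv => hWK v (by simp [hv])
  have F'K : ∀ v ∈ F'.support, v ∈ K := fun v hv => hWK v (by simp [hF'W v hv])
  have pK : ∀ v ∈ p.support, v ∈ K := fun v hv => hDK v (hpDs v hv)
  set E : G.Walk ci u := T2.append (.cons hzn W1) with hE
  have Es : ∀ v, v ∈ E.support ↔ v ∈ T2.support ∨ v ∈ W1.support := by
    intro v
    rw [hE, Walk.mem_support_append_iff, Walk.support_cons, List.mem_cons]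
    constructor
    · rintro (h | rfl | h) <;> simp [*]
    · rintro (h | h) <;> simp [*]
  have Ep : E.IsPath := by
    apply isPath_append t2
    · rw [Walk.cons_isPath_iff]
      exact ⟨hW1, fun h => d1 _ hz (W1K _ h)⟩
    · intro v hv hv'
      rw [Walk.support_cons, List.mem_cons] at hv'
      rcases hv' with h | h
      · exact h
      · exact absurd (W1K v h) (d1 v (t2s v hv))
  set U : G.Walk cj b₁ := R1.append (.cons hxw D) with hU
  have Us : ∀ v, v ∈ U.support ↔ v ∈ R1.support ∨ v ∈ D.support := by
    intro v
    rw [hU, Walk.mem_support_append_iff, Walk.support_cons, List.mem_cons]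
    constructor
    · rintro (h | rfl | h) <;> simp [*]
    · rintro (h | h) <;> simp [*]
  have Up : U.IsPath := by
    apply isPath_append r1
    · rw [Walk.cons_isPath_iff]
      exact ⟨hD, fun h => d2 _ hx (hDK _ h)⟩
    · intro v hv hv'
      rw [Walk.support_cons, List.mem_cons] at hv'
      rcases hv' with h | h
      · exact h
      · exact absurd (hDK v h) (d2 v (r1s v hv))
  have pFp : (p.append F'.reverse).IsPath := by
    apply isPath_append hp hF'.reverse
    intro v hv hv'
    exact hF'D v (by simpa using hv') (hpDs v hv)
  have Lp : (E.append (p.append F'.reverse)).IsPath := by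
    apply isPath_append Ep pFp
    intro v hv hv'
    rw [Walk.mem_support_append_iff, Walk.support_reverse, List.mem_reverse] at hv'
    rcases (Es v).1 hv with h | h
    · rcases hv' with h' | h'
      · exact absurd (pK v h') (d1 v (t2s v h))
      · exact absurd (F'K v h') (d1 v (t2s v h))
    · rcases hv' with h' | h'
      · exact hW1D v h (hpDs v h')
      · exact hW1W' v h (hF'W v h')
  have Ls : ∀ v, v ∈ (E.append (p.append F'.reverse)).support → v ∈ T2.support ∨ v ∈ K := by
    intro v hv
    rw [Walk.mem_support_append_iff, Es, Walk.mem_support_append_iff, Walk.support_reverse,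
      List.mem_reverse] at hv
    rcases hv with (h | h) | h | h
    · exact Or.inl h
    · exact Or.inr (W1K v h)
    · exact Or.inr (pK v h)
    · exact Or.inr (F'K v h)
  have key : ∀ P Q : G.Subgraph, (∀ v ∈ P.verts, v ∈ S₁) → (∀ v ∈ Q.verts, v ∈ S₂) →
      (P ⊔ (E.append (p.append F'.reverse)).toSubgraph) ⊓ (Q ⊔ U.toSubgraph) = p.toSubgraph := by
    intro P Q hP hQ
    have hQU : ∀ v ∈ (Q ⊔ U.toSubgraph).verts, v ∈ S₂ ∨ v ∈ D.support := by
      rintro v (h | h)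
      · exact Or.inl (hQ v h)
      · rw [Walk.mem_verts_toSubgraph, Us] at h
        rcases h with h | h
        · exact Or.inl (r1s v h)
        · exact Or.inr h
    simp only [Walk.toSubgraph_append (p := E), Walk.toSubgraph_append (p := p)]
    apply inf_path (u := u) (u' := u')
    · intro v hv hv'
      rcases hQU v hv' with h | h
      · exact d12 v (hP v hv) h
      · exact d1 v (hP v hv) (hDK v h)
    · intro v hv hv'
      rw [Walk.mem_verts_toSubgraph, Es] at hv
      rcases hv with h | h <;> rcases hQU v hv' with h' | h'
      · exact absurd h' (d12 v (t2s v h))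
      · exact absurd (hDK v h') (d1 v (t2s v h))
      · exact absurd (W1K v h) (d2 v h')
      · exact hW1D v h h'
    · intro v hv hv'
      rw [Walk.mem_verts_toSubgraph, Walk.support_reverse, List.mem_reverse] at hv
      rcases hQU v hv' with h' | h'
      · exact absurd (F'K v hv) (d2 v h')
      · exact hF'D v hv h'
    · simp
    · simp
    · refine le_sup_of_le_right ?_
      rw [hU, Walk.toSubgraph_append]
      refine le_sup_of_le_right ?_
      simp only [Walk.toSubgraph]
      exact le_sup_of_le_right hpD
  have key1 : (E.append (p.append F'.reverse)).toSubgraph ⊓ U.toSubgraph = p.toSubgraph := by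
    have := key ⊥ ⊥ (by simp) (by simp)
    simpa using this
  refine ⟨ci, cj, T0, T1, E.append (p.append F'.reverse), R0, U, R2, ⟨t0, t1, Lp⟩, ⟨r0, Up, r2⟩,
    ⟨fun v h => s1 v (t0s v h), fun v h => s1 v (t1s v h), ?_⟩,
    ⟨fun v h => s2 v (r0s v h), ?_, fun v h => s2 v (r2s v h)⟩,
    ⟨t01, ?_, ?_⟩, ⟨?_, r02, ?_⟩, ?_, u, u', p, hp, key1, ?_, ?_⟩
  · intro v hv
    rcases Ls v hv with h | h
    · exact s1 v (t2s v h)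
    · exact sK v h
  · intro v hv
    rcases (Us v).1 hv with h | h
    · exact s2 v (r1s v h)
    · exact sK v (hDK v h)
  · intro v hv hv'
    rcases Ls v hv' with h | h
    · exact t02 v hv h
    · exact absurd h (d1 v (t0s v hv))
  · intro v hv hv'
    rcases Ls v hv' with h | h
    · exact t12 v hv h
    · exact absurd h (d1 v (t1s v hv))
  · intro v hv hv'
    rcases (Us v).1 hv' with h | h
    · exact r01 v hv h
    · exact absurd (hDK v h) (d2 v (r0s v hv))
  · intro v hv' hv
    rcases (Us v).1 hv' with h | h
    · exact r12 v h hv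
    · exact absurd (hDK v h) (d2 v (r2s v hv))
  · rw [key1, ← key (T0.toSubgraph ⊔ T1.toSubgraph) (R0.toSubgraph ⊔ R2.toSubgraph)]
    · congr 1
      rw [sup_assoc, sup_assoc, sup_comm U.toSubgraph]
    · rintro v (h | h)
      · exact t0s v (by simpa using h)
      · exact t1s v (by simpa using h)
    · rintro v (h | h)
      · exact r0s v (by simpa using h)
      · exact r2s v (by simpa using h)
  · exact fun h => d1 _ (t0s ci (by simp)) (pK _ h)
  · exact fun h => d2 _ (r0s cj (by simp)) (pK _ h)

theorem core1 [Fintype V] {S P : Set V} {a₁ a₂ b₁ b₂ c c' : V}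
    (hP : Cn G P) (sP : ∀ v ∈ P, v ∈ S) (ha2 : a₂ ∈ P) (hb2 : b₂ ∈ P)
    (hR : ∀ x, ∃ (a e : V) (R : G.Walk a e), (a = a₁ ∨ a = a₂) ∧ (e = c ∨ e = c') ∧
      x ∉ R.support ∧ ∀ v ∈ R.support, v ∈ S) (k : ℕ) :
    ∀ (x : V) (α : G.Walk a₁ x) (M K : Set V), (M ∪ K)ᶜ.ncard = k → α.IsPath →
      Att G x M c → Cn G K → b₁ ∈ K → c' ∈ K → (∃ w ∈ K, G.Adj x w) →
      (∀ v ∈ α.support, v ∈ S) → (∀ v ∈ M, v ∈ S) → (∀ v ∈ K, v ∈ S) →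
      (∀ v ∈ α.support, v ∉ M) → (∀ v ∈ α.support, v ∉ K) → (∀ v ∈ α.support, v ∉ P) →
      (∀ v ∈ M, v ∉ K) → (∀ v ∈ M, v ∉ P) → (∀ v ∈ K, v ∉ P) →
      OutA G S a₁ a₂ b₁ b₂ c c' ∨ PB G S a₂ b₂ c' a₁ b₁ c := by
  induction k using Nat.strong_induction_on with
  | _ k ih =>
  intro x α M K hk hα hAtt hK hb1 hc' hxK sα sM sK dαM dαK dαP dMK dMP dKP
  have dec : ∀ (M' K' : Set V) (z : V), M ⊆ M' → K ⊆ K' → z ∈ M' ∪ K' → z ∉ M ∪ K →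
      (M' ∪ K')ᶜ.ncard < k := by
    intro M' K' z hM hK hz hz'
    rw [← hk]
    apply Set.ncard_lt_ncard _ (Set.toFinite _)
    rw [Set.ssubset_iff_of_subset]
    · exact ⟨z, hz', fun h => h hz⟩
    · exact Set.compl_subset_compl.2 (Set.union_subset_union hM hK)
  obtain ⟨a, e, R, ha, he, hxR, sR⟩ := hR x
  have ha' : a ∈ (M ∪ K)ᶜ := by
    rintro (h | h) <;> rcases ha with rfl | rfl
    · exact dαM _ (by simp) h
    · exact dMP _ h ha2
    · exact dαK _ (by simp) h
    · exact dKP _ h ha2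
  have he' : e ∉ (M ∪ K)ᶜ := by
    rw [Set.notMem_compl_iff]
    rcases he with rfl | rfl
    · rcases hAtt with ⟨rfl, -⟩ | ⟨h, -⟩
      · exact absurd (by simp) hxR
      · exact Or.inl h
    · exact Or.inr hc'
  obtain ⟨d, hd, hz, hn⟩ := R.exists_boundary_dart _ ha' he'
  obtain ⟨⟨z, n⟩, hzn⟩ := d
  have hzR : z ∈ R.support := R.dart_fst_mem_support_of_mem_darts hd
  simp only [Set.notMem_compl_iff] at hn
  simp only [Set.mem_compl_iff] at hz
  have hzn : G.Adj z n := hzn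
  have hzS : z ∈ S := sR z hzR
  have hzx : z ≠ x := fun h => hxR (h ▸ hzR)
  have hzM : z ∉ M := fun h => hz (Or.inl h)
  have hzK : z ∉ K := fun h => hz (Or.inr h)
  obtain ⟨w, hw, hxw⟩ := hxK
  by_cases hzP : z ∈ P
  · rcases hn with hn | hn
    · left
      obtain ⟨hcM, hM, -⟩ : c ∈ M ∧ Cn G M ∧ ∃ m ∈ M, G.Adj x m := by
        rcases hAtt with ⟨-, h⟩ | h
        · rw [h] at hn; exact absurd hn (by simp)
        · exact h
      refine ⟨{v | v ∈ α.support} ∪ K, P ∪ M, (Cn.support α).union hK (by simp) hw hxw,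
        hP.union hM hzP hn hzn, ?_, ?_, ?_, Or.inl (by simp), Or.inr hb1, Or.inl ha2, Or.inl hb2,
        Or.inr ⟨Or.inr hc', Or.inr hcM⟩⟩
      · rintro v (h | h)
        exacts [sα v h, sK v h]
      · rintro v (h | h)
        exacts [sP v h, sM v h]
      · rintro v (h | h) (h' | h')
        exacts [dαP v h h', dαM v h h', dKP v h h', dMK v h' h]
    · obtain ⟨q1, q2⟩ := hAtt.union (Cn.support α) (by simp)
      refine finalB hP q1 hK sP ?_ sK ?_ ?_ ?_ ha2 hb2 hzP (Or.inl (by simp)) q2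
        (Or.inl (by simp) : x ∈ _) hb1 hc' hw hn hzn hxw
      · rintro v (h | h)
        exacts [sα v h, sM v h]
      · rintro v h' (h | h)
        exacts [dαP v h h', dMP v h h']
      · exact fun v h h' => dKP v h' h
      · rintro v (h | h)
        exacts [dαK v h, dMK v h]
  by_cases hzα : z ∈ α.support
  · obtain ⟨z', q, t, hzz', hq, hqt, dqt⟩ := splitEdge α hα hzα hzx
    have hqα : ∀ v ∈ q.support, v ∈ α.support := fun v h => (hqt v).2 (Or.inl h)
    have htα : ∀ v ∈ t.support, v ∈ α.support := fun v h => (hqt v).2 (Or.inr h)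
    rcases hn with hn | hn
    · obtain ⟨hcM, hM, -⟩ : c ∈ M ∧ Cn G M ∧ ∃ m ∈ M, G.Adj x m := by
        rcases hAtt with ⟨-, h⟩ | h
        · rw [h] at hn; exact absurd hn (by simp)
        · exact h
      refine ih _ (dec M (K ∪ {v | v ∈ t.support}) x subset_rfl Set.subset_union_left
        (Or.inr (Or.inr (by simp))) ?_) z q M (K ∪ {v | v ∈ t.support}) rfl hq
        (Or.inr ⟨hcM, hM, n, hn, hzn⟩) (hK.union (Cn.support t) hw (by simp) hxw.symm)
        (Or.inl hb1) (Or.inl hc') ⟨z', Or.inr (by simp), hzz'⟩ ?_ sM ?_ ?_ ?_ ?_ ?_ dMP ?_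
      · rintro (h | h)
        exacts [dαM x (by simp) h, dαK x (by simp) h]
      · exact fun v h => sα v (hqα v h)
      · rintro v (h | h)
        exacts [sK v h, sα v (htα v h)]
      · exact fun v h => dαM v (hqα v h)
      · rintro v h (h' | h')
        exacts [dαK v (hqα v h) h', dqt v h h']
      · exact fun v h => dαP v (hqα v h)
      · rintro v h (h' | h')
        exacts [dMK v h h', dαM v (htα v h') h]
      · rintro v (h | h)
        exacts [dKP v h, dαP v (htα v h)]
    · obtain ⟨q1, q2⟩ := hAtt.union (Cn.support t) (by simp)
      refine ih _ (dec ({v | v ∈ t.support} ∪ M) K x Set.subset_union_right subset_rfl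
        (Or.inl (Or.inl (by simp))) ?_) z q ({v | v ∈ t.support} ∪ M) K rfl hq
        (Or.inr ⟨q2, q1, z', Or.inl (by simp), hzz'⟩) hK hb1 hc' ⟨n, hn, hzn⟩ ?_ ?_ sK ?_ ?_ ?_ ?_ ?_ dKP
      · rintro (h | h)
        exacts [dαM x (by simp) h, dαK x (by simp) h]
      · exact fun v h => sα v (hqα v h)
      · rintro v (h | h)
        exacts [sα v (htα v h), sM v h]
      · rintro v h (h' | h')
        exacts [dqt v h h', dαM v (hqα v h) h']
      · exact fun v h => dαK v (hqα v h)
      · exact fun v h => dαP v (hqα v h)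
      · rintro v (h | h)
        exacts [dαK v (htα v h), dMK v h]
      · rintro v (h | h)
        exacts [dαP v (htα v h), dMP v h]
  · rcases hn with hn | hn
    · obtain ⟨hcM, hM, m, hm, hxm⟩ : c ∈ M ∧ Cn G M ∧ ∃ m ∈ M, G.Adj x m := by
        rcases hAtt with ⟨-, h⟩ | h
        · rw [h] at hn; exact absurd hn (by simp)
        · exact h
      refine ih _ (dec (M ∪ {z}) K z Set.subset_union_left subset_rfl
        (Or.inl (Or.inr rfl)) hz) x α (M ∪ {z}) K rfl hα
        (Or.inr ⟨Or.inl hcM, hM.insert' hn hzn.symm, m, Or.inl hm, hxm⟩) hK hb1 hc' ⟨w, hw, hxw⟩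
        sα ?_ sK ?_ dαK dαP ?_ ?_ dKP
      · rintro v (h | rfl)
        exacts [sM v h, hzS]
      · rintro v h (h' | rfl)
        exacts [dαM v h h', hzα h]
      · rintro v (h | rfl)
        exacts [dMK v h, hzK]
      · rintro v (h | rfl)
        exacts [dMP v h, hzP]
    · refine ih _ (dec M (K ∪ {z}) z subset_rfl Set.subset_union_left
        (Or.inr (Or.inr rfl)) hz) x α M (K ∪ {z}) rfl hα hAtt
        (hK.insert' hn hzn.symm) (Or.inl hb1) (Or.inl hc') ⟨w, Or.inl hw, hxw⟩
        sα sM ?_ dαM ?_ dαP ?_ dMP ?_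
      · rintro v (h | rfl)
        exacts [sK v h, hzS]
      · rintro v h (h' | rfl)
        exacts [dαK v h h', hzα h]
      · rintro v h (h' | rfl)
        exacts [dMK v h h', hzM h]
      · rintro v (h | rfl)
        exacts [dKP v h, hzP]

def Goal (G : SimpleGraph V) (S : Set V) (a₁ a₂ b₁ b₂ c c' : V) : Prop :=
  OutA G S a₁ a₂ b₁ b₂ c c' ∨ PB G S a₂ b₂ c' a₁ b₁ c

theorem core2 [Fintype V] {S P : Set V} {a₁ a₂ b₁ b₂ c c' : V}
    (hP : Cn G P) (sP : ∀ v ∈ P, v ∈ S) (ha2 : a₂ ∈ P) (hb2 : b₂ ∈ P)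
    (hR : ∀ x, ∃ (a e : V) (R : G.Walk a e), (a = a₁ ∨ a = a₂) ∧ (e = c ∨ e = c') ∧
      x ∉ R.support ∧ ∀ v ∈ R.support, v ∈ S)
    (L : G.Walk a₁ b₁) (hL : L.IsPath) (sL : ∀ v ∈ L.support, v ∈ S)
    (dLP : ∀ v ∈ L.support, v ∉ P) {x x' : V} {M M' : Set V} (hx : x ∈ L.support)
    (hx' : x' ∈ L.support) (hxx : x ≠ x') (hM : Att G x M c) (hM' : Att G x' M' c')
    (sM : ∀ v ∈ M, v ∈ S) (sM' : ∀ v ∈ M', v ∈ S) (dM : ∀ v ∈ M, v ∉ M')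
    (dLM : ∀ v ∈ L.support, v ∉ M) (dLM' : ∀ v ∈ L.support, v ∉ M')
    (dMP : ∀ v ∈ M, v ∉ P) (dMP' : ∀ v ∈ M', v ∉ P) :
    Goal G S a₁ a₂ b₁ b₂ c c' ∨ Goal G S a₁ a₂ b₁ b₂ c' c := by
  have main : ∀ (c c' x x' : V) (M M' : Set V), 
      (∀ x, ∃ (a e : V) (R : G.Walk a e), (a = a₁ ∨ a = a₂) ∧ (e = c ∨ e = c') ∧
      x ∉ R.support ∧ ∀ v ∈ R.support, v ∈ S) →
      Att G x M c → Att G x' M' c' → (∀ v ∈ M, v ∈ S) →  (∀ v ∈ M', v ∈ S) → (∀ v ∈ M, v ∉ M') →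
      (∀ v ∈ L.support, v ∉ M) → (∀ v ∈ L.support, v ∉ M') → (∀ v ∈ M, v ∉ P) → (∀ v ∈ M', v ∉ P) →
      (∃ (z' : V) (q : G.Walk a₁ x) (t : G.Walk z' b₁), G.Adj x z' ∧ q.IsPath ∧
        (∀ w, w ∈ L.support ↔ w ∈ q.support ∨ w ∈ t.support) ∧
        (∀ w ∈ q.support, w ∉ t.support) ∧ x' ∈ t.support) → Goal G S a₁ a₂ b₁ b₂ c c' := by
    intro c c' x x' M M' hR hM hM' sM sM' dM dLM dLM' dMP dMP' ⟨z', q, t, hxz, hq, hqt, dqt, hxt⟩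
    obtain ⟨q1, q2⟩ := hM'.union (Cn.support t) hxt
    have hqα : ∀ v ∈ q.support, v ∈ L.support := fun v h => (hqt v).2 (Or.inl h)
    have htα : ∀ v ∈ t.support, v ∈ L.support := fun v h => (hqt v).2 (Or.inr h)
    refine core1 hP sP ha2 hb2 hR _ x q M ({v | v ∈ t.support} ∪ M') rfl hq hM q1
      (Or.inl (by simp)) q2 ⟨z', Or.inl (by simp), hxz⟩ (fun v h => sL v (hqα v h)) sM ?_
      (fun v h => dLM v (hqα v h)) ?_ (fun v h => dLP v (hqα v h)) ?_ dMP ?_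
    · rintro v (h | h)
      exacts [sL v (htα v h), sM' v h]
    · rintro v h (h' | h')
      exacts [dqt v h h', dLM' v (hqα v h) h']
    · rintro v h (h' | h')
      exacts [dLM v (htα v h') h, dM v h h']
    · rintro v (h | h)
      exacts [dLP v (htα v h), dMP' v h]
  rcases splitOrder L hL hx hx' hxx with h | h
  · exact Or.inl (main c c' x x' M M' hR hM hM' sM sM' dM dLM dLM' dMP dMP' h)
  · refine Or.inr (main c' c x' x M' M ?_ hM' hM sM' sM (fun v h h' => dM v h' h) dLM' dLM dMP' dMP h)
    intro x
    obtain ⟨a, e, R, h1, h2, h3⟩ := hR x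
    exact ⟨a, e, R, h1, h2.symm, h3⟩

theorem core3 [Fintype V] {S : Set V} {a₁ a₂ b₁ b₂ c₁ c₂ : V}
    (L₁ : G.Walk a₁ b₁) (L₂ : G.Walk a₂ b₂) (R₁ : G.Walk a₁ c₁) (R₂ : G.Walk a₂ c₂)
    (hL₁ : L₁.IsPath) (hL₂ : L₂.IsPath) (hR₁ : R₁.IsPath) (hR₂ : R₂.IsPath)
    (sL₁ : ∀ v ∈ L₁.support, v ∈ S) (sL₂ : ∀ v ∈ L₂.support, v ∈ S)
    (sR₁ : ∀ v ∈ R₁.support, v ∈ S) (sR₂ : ∀ v ∈ R₂.support, v ∈ S)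
    (dL : ∀ v ∈ L₁.support, v ∉ L₂.support) (dR : ∀ v ∈ R₁.support, v ∉ R₂.support) :
    (Goal G S a₁ a₂ b₁ b₂ c₁ c₂ ∨ Goal G S a₁ a₂ b₁ b₂ c₂ c₁) ∨
    (Goal G S a₂ a₁ b₂ b₁ c₁ c₂ ∨ Goal G S a₂ a₁ b₂ b₁ c₂ c₁) := by
  obtain ⟨x, M, hx, hxR, hM, aM⟩ := hitAtt R₁ hR₁ {v | v ∈ L₁.support ∨ v ∈ L₂.support}
    ⟨a₁, by simp, by simp⟩
  obtain ⟨x', M', hx', hxR', hM', aM'⟩ := hitAtt R₂ hR₂ {v | v ∈ L₁.support ∨ v ∈ L₂.support}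
    ⟨a₂, by simp, by simp⟩
  have hxx : x ≠ x' := fun h => dR x hxR (h ▸ hxR')
  have hR : ∀ x, ∃ (a e : V) (R : G.Walk a e), (a = a₁ ∨ a = a₂) ∧ (e = c₁ ∨ e = c₂) ∧
      x ∉ R.support ∧ ∀ v ∈ R.support, v ∈ S := by
    intro x
    by_cases h : x ∈ R₁.support
    · exact ⟨_, _, R₂, by simp, by simp, dR x h, sR₂⟩
    · exact ⟨_, _, R₁, by simp, by simp, h, sR₁⟩
  have sM : ∀ v ∈ M, v ∈ S := fun v h => sR₁ v (hM v h).1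
  have sM' : ∀ v ∈ M', v ∈ S := fun v h => sR₂ v (hM' v h).1
  have dM : ∀ v ∈ M, v ∉ M' := fun v h h' => dR v (hM v h).1 (hM' v h').1
  have e1 : ∀ v ∈ L₁.support, v ∉ M := fun v h h' => (hM v h').2 (Or.inl h)
  have e2 : ∀ v ∈ L₂.support, v ∉ M := fun v h h' => (hM v h').2 (Or.inr h)
  have e1' : ∀ v ∈ L₁.support, v ∉ M' := fun v h h' => (hM' v h').2 (Or.inl h)
  have e2' : ∀ v ∈ L₂.support, v ∉ M' := fun v h h' => (hM' v h').2 (Or.inr h)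
  have r1 : ∀ v ∈ M, v ∉ L₁.support := fun v h h' => e1 v h' h
  have r2 : ∀ v ∈ M, v ∉ L₂.support := fun v h h' => e2 v h' h
  have r1' : ∀ v ∈ M', v ∉ L₁.support := fun v h h' => e1' v h' h
  have r2' : ∀ v ∈ M', v ∉ L₂.support := fun v h h' => e2' v h' h
  rcases hx with hx | hx <;> rcases hx' with hx' | hx'
  · left
    exact core2 (Cn.support L₂) sL₂ (by simp) (by simp) hR L₁ hL₁ sL₁ dL hx hx' hxx aM aM' sM sM'
      dM e1 e1' r2 r2'
  · left; left; left
    obtain ⟨q1, q2⟩ := aM.union (Cn.support L₁) hx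
    obtain ⟨q1', q2'⟩ := aM'.union (Cn.support L₂) hx'
    refine ⟨_, _, q1, q1', ?_, ?_, ?_, Or.inl (by simp), Or.inl (by simp), Or.inl (by simp), 
      Or.inl (by simp), Or.inl ⟨q2, q2'⟩⟩
    · rintro v (h | h)
      exacts [sL₁ v h, sM v h]
    · rintro v (h | h)
      exacts [sL₂ v h, sM' v h]
    · rintro v (h | h) (h' | h')
      exacts [dL v h h', e1' v h h', e2 v h' h, dM v h h']
  · left; left; left
    obtain ⟨q1, q2⟩ := aM.union (Cn.support L₂) hx
    obtain ⟨q1', q2'⟩ := aM'.union (Cn.support L₁) hx'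
    refine ⟨_, _, q1', q1, ?_, ?_, ?_, Or.inl (by simp), Or.inl (by simp), Or.inl (by simp), 
      Or.inl (by simp), Or.inr ⟨q2', q2⟩⟩
    · rintro v (h | h)
      exacts [sL₁ v h, sM' v h]
    · rintro v (h | h)
      exacts [sL₂ v h, sM v h]
    · rintro v (h | h) (h' | h')
      exacts [dL v h h', e1 v h h', e2' v h' h, dM v h' h]
  · right
    refine core2 (Cn.support L₁) sL₁ (by simp) (by simp) ?_ L₂ hL₂ sL₂ (fun v h h' => dL v h' h)
      hx hx' hxx aM aM' sM sM' dM e2 e2' r1 r1'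
    intro x
    obtain ⟨a, e, R, h1, h2⟩ := hR x
    exact ⟨a, e, R, h1.symm, h2⟩

end PAB


theorem PAB.toB {V T : Type} {G : SimpleGraph V} {Tr : SimpleGraph T} {X : T → Finset V} {s : ℕ}
    {η : TVert 1 → T} {I : Finset V} {ξ : MVert 1 → Fin s → V} {i j : Fin s}
    (hσ : ([] : List Bool).length + 1 ≤ 1)
    {a b c a' b' c' : V}
    (ha : ({a, a'} : Set V) = {ξ ⟨[], Nat.le_of_succ_le hσ⟩ i, ξ ⟨[], Nat.le_of_succ_le hσ⟩ j})
    (hb : ({b, b'} : Set V) = {ξ ⟨[false], by simp⟩ i, ξ ⟨[false], by simp⟩ j})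
    (hc : ({c, c'} : Set V) = {ξ ⟨[true], by simp⟩ i, ξ ⟨[true], by simp⟩ j})
    (h1 : a ≠ b) (h2 : a ≠ c) (h3 : b ≠ c) (h1' : a' ≠ b') (h2' : a' ≠ c') (h3' : b' ≠ c')
    (h : PAB.PB G (torsoSet Tr X η I [] hσ) a b c a' b' c') :
    HasPropB G Tr X η I ξ [] hσ i j := by
  obtain ⟨ci, cj, W0, W1, W2, U0, U1, U2, ⟨w0, w1, w2⟩, ⟨u0, u1, u2⟩, ⟨sw0, sw1, sw2⟩,
    ⟨su0, su1, su2⟩, ⟨w01, w02, w12⟩, ⟨u01, u02, u12⟩, hinf, hp⟩ := h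
  refine ⟨![a, b, c], ![a', b', c'], ci, cj,
    fun y => match y with | 0 => W0 | 1 => W1 | 2 => W2,
    fun y => match y with | 0 => U0 | 1 => U1 | 2 => U2, ?_, ?_, ?_, ?_, ?_, ?_, ?_,
    PAB.lens W0 W1 W2 h1 h2 h3, PAB.lens U0 U1 U2 h1' h2' h3', hinf, hp⟩
  · intro y
    fin_cases y
    exacts [ha, hb, hc]
  · intro y
    fin_cases y
    exacts [w0, w1, w2]
  · intro y
    fin_cases y
    exacts [u0, u1, u2]
  · intro y
    fin_cases y
    exacts [sw0, sw1, sw2]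
  · intro y
    fin_cases y
    exacts [su0, su1, su2]
  · intro y y' hy
    fin_cases y <;> fin_cases y'
    exacts [absurd rfl hy, w01, w02, fun v h h' => w01 v h' h, absurd rfl hy, w12,
      fun v h h' => w02 v h' h, fun v h h' => w12 v h' h, absurd rfl hy]
  · intro y y' hy
    fin_cases y <;> fin_cases y'
    exacts [absurd rfl hy, u01, u02, fun v h h' => u01 v h' h, absurd rfl hy, u12,
      fun v h h' => u02 v h' h, fun v h h' => u12 v h' h, absurd rfl hy]

theorem PAB.tri {V : Type} {G : SimpleGraph V} {S A : Set V} (hA : PAB.Cn G A)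
    (hS : ∀ v ∈ A, v ∈ S) {f g h : V} (hf : f ∈ A) (hg : g ∈ A) (hh : h ∈ A)
    (h1 : f ≠ g) (h2 : f ≠ h) (h3 : g ≠ h) :
    ∃ (H : G.Subgraph) (c : V), IsTripodOn G S H c f g h ∧ ∀ v ∈ H.verts, v ∈ A := by
  obtain ⟨c, W1, W2, W3, w1, w2, w3, s1, s2, s3, w12, w13, w23⟩ := PAB.tripod hA hf hg hh
  refine ⟨_, c, ⟨W1, W2, W3, w1, w2, w3, fun v h => hS v (s1 v h), fun v h => hS v (s2 v h),
    fun v h => hS v (s3 v h), w12, w13, w23, PAB.lens W1 W2 W3 h1 h2 h3, rfl⟩, ?_⟩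
  rintro v ((h | h) | h)
  · exact s1 v (by simpa using h)
  · exact s2 v (by simpa using h)
  · exact s3 v (by simpa using h)

/-- Lemma 6.1. Let `η` be an ordered cascade of height one and size
`s + |I|` in a tree-decomposition `(T, X)` of `G`, with orderings `ξ`, and let `t₀` be the
major vertex of `T₁`. If `t₀` has property `AB_{ij}` in `η`, then `t₀` has property
`A_{ij}` or property `B_{ij}` in `η`. -/
theorem propA_or_propB_of_propAB {V T : Type} [Fintype V] [Fintype T]
    (G : SimpleGraph V) (Tr : SimpleGraph T) (X : T → Finset V)
    (hTD : IsTreeDecomp G Tr X) (s : ℕ) (η : TVert 1 → T) (I : Finset V)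
    (ξ : MVert 1 → Fin s → V)
    (hη : IsOrderedCascade G Tr X 1 s η I ξ)
    (i j : Fin s) (hij : i ≠ j)
    (hAB : HasPropAB G Tr X η I ξ [] (by simp) i j) :
    HasPropA G Tr X η I ξ [] (by simp) i j ∨ HasPropB G Tr X η I ξ [] (by simp) i j := by
  have hσ : ([] : List Bool).length + 1 ≤ 1 := by simp
  obtain ⟨⟨-, -, hI⟩, hξ, -⟩ := hη
  have hne : ∀ (t t' : MVert 1) (k k' : Fin s), t ≠ t' → ξ t k ≠ ξ t' k' := by
    intro t t' k k' htt he
    have m1 : ξ t k ∈ (X (η (Sum.inl t)) : Set V) \ (I : Set V) := by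
      rw [← (hξ t).2]; exact ⟨k, rfl⟩
    have m2 : ξ t' k' ∈ (X (η (Sum.inl t')) : Set V) \ (I : Set V) := by
      rw [← (hξ t').2]; exact ⟨k', rfl⟩
    have := hI (Sum.inl t) (Sum.inl t') (fun h => htt (Sum.inl.inj h))
    apply m1.2
    rw [← this]
    exact ⟨m1.1, he ▸ m2.1⟩
  have nab : ∀ k k', ξ ⟨[], Nat.le_of_succ_le hσ⟩ k ≠ ξ ⟨[false], by simp⟩ k' :=
    fun k k' => hne _ _ k k' (by simp)
  have nac : ∀ k k', ξ ⟨[], Nat.le_of_succ_le hσ⟩ k ≠ ξ ⟨[true], by simp⟩ k' :=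
    fun k k' => hne _ _ k k' (by simp)
  have nbc : ∀ k k', ξ ⟨[false], by simp⟩ k ≠ ξ ⟨[true], by simp⟩ k' :=
    fun k k' => hne _ _ k k' (by simp)
  obtain ⟨Li, Lj, Ri, Rj, p1, p2, p3, p4, s1, s2, s3, s4, dL, dR⟩ := hAB
  have main := PAB.core3 Li Lj Ri Rj p1 p2 p3 p4 s1 s2 s3 s4 dL dR
  have outA : ∀ m n, (m = i ∨ m = j) → (n = i ∨ n = j) →
      PAB.OutA G (torsoSet Tr X η I [] hσ) (ξ ⟨[], Nat.le_of_succ_le hσ⟩ i)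
      (ξ ⟨[], Nat.le_of_succ_le hσ⟩ j) (ξ ⟨[false], by simp⟩ i) (ξ ⟨[false], by simp⟩ j)
      (ξ ⟨[true], by simp⟩ m) (ξ ⟨[true], by simp⟩ n) → HasPropA G Tr X η I ξ [] hσ i j := by
    intro m n hm hn h
    obtain ⟨S₁, S₂, c1, c2, t1, t2, d, ha1, hb1, ha2, hb2, hc⟩ := h
    have : ∃ m' n', (m' = i ∨ m' = j) ∧ (n' = i ∨ n' = j) ∧ ξ ⟨[true], by simp⟩ m' ∈ S₁ ∧
        ξ ⟨[true], by simp⟩ n' ∈ S₂ := by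
      rcases hc with hc | hc
      · exact ⟨m, n, hm, hn, hc⟩
      · exact ⟨n, m, hn, hm, hc⟩
    obtain ⟨m', n', hm', hn', hc1, hc2⟩ := this
    obtain ⟨H1, x1, T1, v1⟩ := PAB.tri c1 t1 ha1 hb1 hc1 (nab _ _) (nac _ _) (nbc _ _)
    obtain ⟨H2, x2, T2, v2⟩ := PAB.tri c2 t2 ha2 hb2 hc2 (nab _ _) (nac _ _) (nbc _ _)
    refine ⟨H1, H2, x1, x2, ⟨i, m', Or.inl rfl, hm', T1⟩, ⟨j, n', Or.inr rfl, hn', T2⟩, ?_⟩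
    rw [Set.disjoint_left]
    exact fun v h h' => d v (v1 v h) (v2 v h')
  have swap : ∀ {c c' : V}, PAB.OutA G (torsoSet Tr X η I [] hσ) (ξ ⟨[], Nat.le_of_succ_le hσ⟩ j)
      (ξ ⟨[], Nat.le_of_succ_le hσ⟩ i) (ξ ⟨[false], by simp⟩ j) (ξ ⟨[false], by simp⟩ i) c c' →
      PAB.OutA G (torsoSet Tr X η I [] hσ) (ξ ⟨[], Nat.le_of_succ_le hσ⟩ i)
      (ξ ⟨[], Nat.le_of_succ_le hσ⟩ j) (ξ ⟨[false], by simp⟩ i) (ξ ⟨[false], by simp⟩ j) c c' := by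
    intro c c' h
    obtain ⟨S₁, S₂, c1, c2, t1, t2, d, ha1, hb1, ha2, hb2, hc⟩ := h
    exact ⟨S₂, S₁, c2, c1, t2, t1, fun v h h' => d v h' h, ha2, hb2, ha1, hb1,
      hc.symm.imp And.symm And.symm⟩
  rcases main with (h | h) | (h | h) <;> rcases h with h | h
  · exact Or.inl (outA i j (Or.inl rfl) (Or.inr rfl) h)
  · exact Or.inr (PAB.toB hσ (Set.pair_comm _ _) (Set.pair_comm _ _) (Set.pair_comm _ _)
      (nab _ _) (nac _ _) (nbc _ _) (nab _ _) (nac _ _) (nbc _ _) h)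
  · exact Or.inl (outA j i (Or.inr rfl) (Or.inl rfl) h)
  · exact Or.inr (PAB.toB hσ (Set.pair_comm _ _) (Set.pair_comm _ _) rfl
      (nab _ _) (nac _ _) (nbc _ _) (nab _ _) (nac _ _) (nbc _ _) h)
  · exact Or.inl (outA i j (Or.inl rfl) (Or.inr rfl) (swap h))
  · exact Or.inr (PAB.toB hσ rfl rfl (Set.pair_comm _ _)
      (nab _ _) (nac _ _) (nbc _ _) (nab _ _) (nac _ _) (nbc _ _) h)
  · exact Or.inl (outA j i (Or.inr rfl) (Or.inl rfl) (swap h))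
  · exact Or.inr (PAB.toB hσ rfl rfl rfl
      (nab _ _) (nac _ _) (nbc _ _) (nab _ _) (nac _ _) (nbc _ _) h)
end

section
/- For every integer k ≥ 2, the graph 𝒬_k has a minor isomorphic to the binary tree CT_{k−1}. -/
/-!
Common definitions: minors, widths, connectivity, the specific graphs
`K4`, `K23`, `C32`, `graphA`, the binary trees `CT_h`, the graphs `𝒫_k`, `𝒬_k`,
the trees `T_h`, homeomorphic embeddings, cascades, and related notions,
following Dang--Thomas, "Minors of two-connected graphs of large path-width".
-/

open SimpleGraph

/-- For every `k ≥ 2`, the graph `𝒬_k` has a minor isomorphic to the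
binary tree `CT_{k-1}`. -/
theorem Qk_has_CT_minor (k : ℕ) (hk : 2 ≤ k) : IsMinor (CTgraph (k - 1)) (Qgraph k) := by
  have key : ∀ (b : Bool) (σ : List Bool) (h1 : σ.length < k) (h2 : (b :: σ).length < k),
      (Qgraph k).Adj (Sum.inr ⟨b :: σ, h2⟩) (Sum.inr ⟨σ, h1⟩) := by
    intro b σ h1 h2
    rw [Qgraph, SimpleGraph.fromEdgeSet_adj]
    refine ⟨Or.inr ⟨b :: σ, h2, Or.inr ?_⟩, ?_⟩
    · simp [qbase, h1]
    · intro h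
      have h' := congrArg Subtype.val (Sum.inr.inj h)
      have := congrArg List.length h'
      simp at this
  refine ⟨fun w => {Sum.inr ⟨w.1, by have := w.2; omega⟩}, ?_, ?_, ?_, ?_⟩
  · intro w
    exact Set.singleton_nonempty _
  · intro w
    refine @SimpleGraph.Connected.mk _ _ ?_ ?_
    · intro u v
      have : u = v := Subtype.ext (u.2.trans v.2.symm)
      rw [this]
    · exact ⟨⟨_, rfl⟩⟩
  · intro w₁ w₂ hne
    rw [Set.disjoint_singleton]
    intro h
    have h' := Sum.inr.inj h
    rw [Subtype.mk.injEq] at h'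
    exact hne (Subtype.ext h')
  · intro w₁ w₂ hadj
    refine ⟨_, rfl, _, rfl, ?_⟩
    rw [CTgraph, SimpleGraph.fromEdgeSet_adj] at hadj
    obtain ⟨⟨b, σ, hσ, he⟩, -⟩ := hadj
    rcases Sym2.eq_iff.mp he with ⟨rfl, rfl⟩ | ⟨rfl, rfl⟩
    · exact (key b σ _ _).symm
    · exact key b σ _ _
end

section
/- For every positive integer k, the graph 𝒬_k is outerplanar; consequently neither K_4 nor K_{2,3} is a minor of 𝒬_k. -/
/-!
Common definitions: minors, widths, connectivity, the specific graphs
`K4`, `K23`, `C32`, `graphA`, the binary trees `CT_h`, the graphs `𝒫_k`, `𝒬_k`,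
the trees `T_h`, homeomorphic embeddings, cascades, and related notions,
following Dang--Thomas, "Minors of two-connected graphs of large path-width".
-/

open SimpleGraph

/-- Boundary-edge form of connectivity of a vertex set. -/
def SetConn {V : Type*} (G : SimpleGraph V) (S : Set V) : Prop :=
  ∀ (P : V → Prop) (a b : V), a ∈ S → b ∈ S → P a → ¬ P b →
    ∃ x ∈ S, ∃ y ∈ S, G.Adj x y ∧ P x ∧ ¬ P y

theorem setConn_of_connected {V : Type*} {G : SimpleGraph V} {S : Set V}
    (h : (G.induce S).Connected) : SetConn G S := by
  intro P a b ha hb hPa hPb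
  obtain ⟨w⟩ := h.preconnected ⟨a, ha⟩ ⟨b, hb⟩
  obtain ⟨d, -, h1, h2⟩ := w.exists_boundary_dart {x | P x.1} hPa hPb
  exact ⟨d.fst.1, d.fst.2, d.snd.1, d.snd.2, d.adj, h1, h2⟩

theorem SetConn.union {V : Type*} {G : SimpleGraph V} {S T : Set V}
    (hS : SetConn G S) (hT : SetConn G T) {u v : V} (hu : u ∈ S) (hv : v ∈ T)
    (huv : G.Adj u v) : SetConn G (S ∪ T) := by
  intro P a b ha hb hPa hPb
  have key : ∀ c d, c ∈ S ∪ T → d ∈ S → P c → ¬ P d →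
      ∃ x ∈ S ∪ T, ∃ y ∈ S ∪ T, G.Adj x y ∧ P x ∧ ¬ P y := by
    intro c d hc hd hPc hPd
    by_cases hPu : P u
    · obtain ⟨x, hx, y, hy, h⟩ := hS P u d hu hd hPu hPd
      exact ⟨x, Or.inl hx, y, Or.inl hy, h⟩
    · rcases hc with hc | hc
      · obtain ⟨x, hx, y, hy, h⟩ := hS P c d hc hd hPc hPd
        exact ⟨x, Or.inl hx, y, Or.inl hy, h⟩
      · by_cases hPv : P v
        · exact ⟨v, Or.inr hv, u, Or.inl hu, huv.symm, hPv, hPu⟩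
        · obtain ⟨x, hx, y, hy, h⟩ := hT P c v hc hv hPc hPv
          exact ⟨x, Or.inr hx, y, Or.inr hy, h⟩
  by_cases hPu : P u
  · rcases hb with hb | hb
    · exact key a b ha hb hPa hPb
    · by_cases hPv : P v
      · obtain ⟨x, hx, y, hy, h⟩ := hT P v b hv hb hPv hPb
        exact ⟨x, Or.inr hx, y, Or.inr hy, h⟩
      · exact ⟨u, Or.inl hu, v, Or.inr hv, huv, hPu, hPv⟩
  · exact key a u ha hu hPa hPu

/-- No two edges cross with respect to the vertex positions `f`. -/
def NonCross {V : Type*} (G : SimpleGraph V) (f : V → ℚ) : Prop :=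
  ∀ u v x y, G.Adj u v → G.Adj x y → ¬ (f u < f x ∧ f x < f v ∧ f v < f y)

theorem NonCross.sets {V : Type*} {G : SimpleGraph V} {f : V → ℚ} (hG : NonCross G f)
    (hf : Function.Injective f) {S T : Set V} (hS : SetConn G S) (hT : SetConn G T)
    (hd : Disjoint S T) {s₁ s₂ t₁ t₂ : V} (hs₁ : s₁ ∈ S) (hs₂ : s₂ ∈ S) (ht₁ : t₁ ∈ T)
    (ht₂ : t₂ ∈ T) : ¬ (f s₁ < f t₁ ∧ f t₁ < f s₂ ∧ f s₂ < f t₂) := by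
  rintro ⟨h1, h2, h3⟩
  have hne : ∀ s ∈ S, ∀ t ∈ T, f s ≠ f t := fun s hs t ht h =>
    (Set.disjoint_left.1 hd hs) (hf h ▸ ht)
  obtain ⟨x, hx, y, hy, hxy, ⟨hx1, hx2⟩, hPy⟩ :=
    hS (fun s => f t₁ < f s ∧ f s < f t₂) s₂ s₁ hs₂ hs₁ ⟨h2, h3⟩ (fun h => lt_asymm h.1 h1)
  rcases lt_or_gt_of_ne (hne y hy t₁ ht₁) with hy1 | hy1
  · obtain ⟨p, hp, q, hq, hpq, ⟨hp1, hp2⟩, hQ⟩ :=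
      hT (fun t => f y < f t ∧ f t < f x) t₁ t₂ ht₁ ht₂ ⟨hy1, hx1⟩ (fun h => lt_asymm h.2 hx2)
    rcases lt_or_gt_of_ne (hne y hy q hq) with hq1 | hq1
    · have hq2 : f x < f q := lt_of_le_of_ne (not_lt.1 fun h => hQ ⟨hq1, h⟩) (hne x hx q hq)
      exact hG y x p q hxy.symm hpq ⟨hp1, hp2, hq2⟩
    · exact hG q p y x hpq.symm hxy.symm ⟨hq1, hp1, hp2⟩
  · have hy2 : f t₂ < f y :=
      lt_of_le_of_ne (not_lt.1 fun h => hPy ⟨hy1, h⟩) (hne y hy t₂ ht₂).symm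
    obtain ⟨p, hp, q, hq, hpq, ⟨hp1, hp2⟩, hQ⟩ :=
      hT (fun t => f x < f t ∧ f t < f y) t₂ t₁ ht₂ ht₁ ⟨hx2, hy2⟩ (fun h => lt_asymm h.1 hx1)
    rcases lt_or_gt_of_ne (hne x hx q hq) with hq1 | hq1
    · have hq2 : f y < f q := lt_of_le_of_ne (not_lt.1 fun h => hQ ⟨hq1, h⟩) (hne y hy q hq)
      exact hG x y p q hxy hpq ⟨hp1, hp2, hq2⟩
    · exact hG q p x y hpq.symm hxy ⟨hq1, hp1, hp2⟩

/-- Chords between representatives of branch sets do not cross. -/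
theorem NonCross.model {V W : Type*} {G : SimpleGraph V} {H : SimpleGraph W} {f : V → ℚ}
    (hG : NonCross G f) (hf : Function.Injective f) {F : W → Set V} (hF : IsMinorModel H G F)
    {r : W → V} (hr : ∀ w, r w ∈ F w) {a b c d : W} (hab : H.Adj a b) (hcd : H.Adj c d)
    (hac : a ≠ c) (had : a ≠ d) (hbc : b ≠ c) (hbd : b ≠ d) :
    ¬ (f (r a) < f (r c) ∧ f (r c) < f (r b) ∧ f (r b) < f (r d)) := by
  obtain ⟨-, hconn, hdis, hadj⟩ := hF
  obtain ⟨u, hu, v, hv, huv⟩ := hadj a b hab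
  obtain ⟨x, hx, y, hy, hxy⟩ := hadj c d hcd
  refine hG.sets hf
    ((setConn_of_connected (hconn a)).union (setConn_of_connected (hconn b)) hu hv huv)
    ((setConn_of_connected (hconn c)).union (setConn_of_connected (hconn d)) hx hy hxy) ?_
    (Or.inl (hr a)) (Or.inr (hr b)) (Or.inl (hr c)) (Or.inr (hr d))
  rw [Set.disjoint_union_left, Set.disjoint_union_right, Set.disjoint_union_right]
  exact ⟨⟨hdis _ _ hac, hdis _ _ had⟩, hdis _ _ hbc, hdis _ _ hbd⟩

theorem NonCross.no_K4 {V : Type*} {G : SimpleGraph V} {f : V → ℚ}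
    (hG : NonCross G f) (hf : Function.Injective f) : ¬ IsMinor K4 G := by
  rintro ⟨F, hF⟩
  choose r hr using hF.1
  have hinj : Function.Injective (fun w => f (r w)) := by
    intro a b h
    by_contra hab
    exact Set.disjoint_left.1 (hF.2.2.1 a b hab) (hr a) (hf h ▸ hr b)
  have key : ∀ a b c d : Fin 4,
      ¬ (f (r a) < f (r c) ∧ f (r c) < f (r b) ∧ f (r b) < f (r d)) := by
    rintro a b c d ⟨h1, h2, h3⟩
    have e : ∀ x y : Fin 4, f (r x) < f (r y) → x ≠ y := by
      rintro x y h rfl; exact lt_irrefl _ h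
    exact hG.model hf hF hr (show K4.Adj a b from e _ _ (h1.trans h2))
      (show K4.Adj c d from e _ _ (h2.trans h3)) (e _ _ h1) (e _ _ (h1.trans (h2.trans h3)))
      (e _ _ h2).symm (e _ _ h3) ⟨h1, h2, h3⟩
  let s : Finset ℚ := Finset.univ.image (fun w => f (r w))
  have hs : s.card = 4 := by
    rw [Finset.card_image_of_injective _ hinj]; simp
  let o := s.orderEmbOfFin hs
  have ho : ∀ i, ∃ w, f (r w) = o i := by
    intro i
    have := s.orderEmbOfFin_mem hs i
    obtain ⟨w, -, hw⟩ := Finset.mem_image.1 this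
    exact ⟨w, hw⟩
  choose w hw using ho
  apply key (w 0) (w 2) (w 1) (w 3)
  simp only [hw]
  refine ⟨o.strictMono ?_, o.strictMono ?_, o.strictMono ?_⟩ <;> decide

theorem NonCross.no_K23 {V : Type*} {G : SimpleGraph V} {f : V → ℚ}
    (hG : NonCross G f) (hf : Function.Injective f) : ¬ IsMinor K23 G := by
  rintro ⟨F, hF⟩
  choose r hr using hF.1
  have hinj : ∀ a b, a ≠ b → f (r a) ≠ f (r b) := by
    intro a b hab h
    exact Set.disjoint_left.1 (hF.2.2.1 a b hab) (hr a) (hf h ▸ hr b)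
  have adj : ∀ i j, K23.Adj (Sum.inl i) (Sum.inr j) := by
    intro i j; simp [K23]
  let a : Fin 2 → ℚ := fun i => f (r (Sum.inl i))
  let b : Fin 3 → ℚ := fun i => f (r (Sum.inr i))
  have hab : ∀ i j, a i ≠ b j := fun i j => hinj _ _ (by simp)
  have hbb : ∀ i j, i ≠ j → b i ≠ b j := fun i j h => hinj _ _ (by simpa using h)
  have k1 : ∀ i i' j j', i ≠ i' → j ≠ j' → ¬ (a i < a i' ∧ a i' < b j ∧ b j < b j') := by
    intro i i' j j' h h'
    exact hG.model hf hF hr (adj i j) (adj i' j') (by simpa) (by simp) (by simp) (by simpa)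
  have k2 : ∀ i i' j j', i ≠ i' → j ≠ j' → ¬ (a i < b j' ∧ b j' < b j ∧ b j < a i') := by
    intro i i' j j' h h'
    exact hG.model hf hF hr (adj i j) (adj i' j').symm (by simp) (by simpa) (by simpa) (by simp)
  have k3 : ∀ i i' j j', i ≠ i' → j ≠ j' → ¬ (b j < a i' ∧ a i' < a i ∧ a i < b j') := by
    intro i i' j j' h h'
    exact hG.model hf hF hr (adj i j).symm (adj i' j') (by simp) (by simpa) (by simpa) (by simp)
  have k4 : ∀ i i' j j', i ≠ i' → j ≠ j' → ¬ (b j < b j' ∧ b j' < a i ∧ a i < a i') := by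
    intro i i' j j' h h'
    exact hG.model hf hF hr (adj i j).symm (adj i' j').symm (by simpa) (by simp) (by simp)
      (by simpa)
  have main : ∀ p q : Fin 2, p ≠ q → a p < a q → False := by
    intro p q hpq hlt
    have same : ∀ j j', j ≠ j' → b j < b j' →
        ((a p < b j ∧ b j < a q) ↔ (a p < b j' ∧ b j' < a q)) → False := by
      intro j j' hj hjj h
      have := k1 p q j j' hpq hj
      have := k2 p q j' j hpq hj.symm
      have := k3 q p j j' hpq.symm hj
      have := k4 p q j j' hpq hj
      have := hab p j
      have := hab p j'
      have := hab q j
      have := hab q j'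
      grind
    have same' : ∀ j j', j ≠ j' → 
        ((a p < b j ∧ b j < a q) ↔ (a p < b j' ∧ b j' < a q)) → False := by
      intro j j' hj h
      rcases lt_or_gt_of_ne (hbb j j' hj) with h' | h'
      · exact same j j' hj h' h
      · exact same j' j hj.symm h' h.symm
    have s1 := same' 0 1 (by decide)
    have s2 := same' 0 2 (by decide)
    have s3 := same' 1 2 (by decide)
    tauto
  rcases lt_or_gt_of_ne (hinj (Sum.inl 0) (Sum.inl 1) (by simp)) with h | h
  · exact main 0 1 (by decide) h
  · exact main 1 0 (by decide) h

/-- Scaled positions of the ends of the base edge at a node. -/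
def qN : List Bool → ℤ × ℤ
  | [] => (0, 1)
  | b :: σ => (2 * (if b then (qN σ).2 else (qN σ).1), (qN σ).1 + (qN σ).2)

theorem qN_diff (σ : List Bool) : (qN σ).2 = (qN σ).1 + 1 ∨ (qN σ).1 = (qN σ).2 + 1 := by
  induction σ with
  | nil => simp [qN]
  | cons b σ ih => cases b <;> simp [qN] <;> omega

theorem qN_inj (σ τ : List Bool) (hl : σ.length = τ.length)
    (h : (qN σ).1 + (qN σ).2 = (qN τ).1 + (qN τ).2) : σ = τ := by
  induction σ generalizing τ with
  | nil => simpa using hl.symm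
  | cons b σ ih =>
    cases τ with
    | nil => simp at hl
    | cons c τ =>
      have h1 := qN_diff σ
      have h2 := qN_diff τ
      have hst : σ = τ := by
        apply ih τ (by simpa using hl)
        cases b <;> cases c <;> simp [qN] at h <;> omega
      subst hst
      cases b <;> cases c <;> simp [qN] at h ⊢ <;> omega

/-- Positions of the vertices of `𝒬_k` on a line. -/
def qpos (k : ℕ) : QVert k → ℚ
  | Sum.inl false => 0
  | Sum.inl true => 1
  | Sum.inr σ => (((qN σ.1).1 + (qN σ.1).2 : ℤ) : ℚ) / 2 ^ (σ.1.length + 1)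

theorem qpos_base (k : ℕ) (σ : List Bool) (h : σ.length ≤ k) :
    qpos k (qbase k σ).1 = ((qN σ).1 : ℚ) / 2 ^ σ.length ∧
    qpos k (qbase k σ).2 = ((qN σ).2 : ℚ) / 2 ^ σ.length := by
  induction σ with
  | nil => simp [qbase, qN, qpos]
  | cons b σ ih =>
    have h' : σ.length < k := by simpa using h
    obtain ⟨h1, h2⟩ := ih h'.le
    constructor
    · cases b <;> simp [qbase, qN, h1, h2] <;> field_simp <;> ring
    · simp [qbase, qN, h', qpos]

theorem qdyadic_aux (m n : ℕ) (p q : ℤ) (hp : p % 2 = 1) (hq : q % 2 = 1) (hmn : m < n)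
    (h : (p : ℚ) / 2 ^ m = (q : ℚ) / 2 ^ n) : False := by
  obtain ⟨d, rfl⟩ := Nat.exists_eq_add_of_lt hmn
  have h2 : (p : ℚ) * (2 * 2 ^ d) = q := by
    rw [pow_add, pow_add] at h
    field_simp at h
    linarith
  have h3 : p * (2 * 2 ^ d) = q := by exact_mod_cast h2
  have h4 : q = 2 * (p * 2 ^ d) := by rw [← h3]; ring
  omega

theorem qN_odd (σ : List Bool) : ((qN σ).1 + (qN σ).2) % 2 = 1 := by
  have := qN_diff σ
  omega

theorem qpos_inj (k : ℕ) : Function.Injective (qpos k) := by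
  have a0 : ∀ σ, qpos k (Sum.inl false) ≠ qpos k (Sum.inr σ) := by
    intro σ h
    have h1 := qN_odd σ.1
    simp only [qpos] at h
    have h2 := h.symm
    rw [div_eq_zero_iff] at h2
    rcases h2 with h2 | h2
    · have : (qN σ.1).1 + (qN σ.1).2 = 0 := by exact_mod_cast h2
      omega
    · exact absurd h2 (by positivity)
  have a1 : ∀ σ, qpos k (Sum.inl true) ≠ qpos k (Sum.inr σ) := by
    intro σ h
    simp only [qpos] at h
    exact qdyadic_aux 0 _ 1 _ (by norm_num) (qN_odd σ.1) (Nat.succ_pos _) (by simpa using h)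
  rintro ((_ | _) | u) ((_ | _) | v) h
  all_goals first
    | rfl
    | exact absurd h (a0 _)
    | exact absurd h (a1 _)
    | exact absurd h.symm (a0 _)
    | exact absurd h.symm (a1 _)
    | (simp [qpos] at h; done)
    | skip
  simp only [qpos] at h
  have hl : u.1.length = v.1.length := by
    rcases lt_trichotomy u.1.length v.1.length with hl | hl | hl
    · exact (qdyadic_aux _ _ _ _ (qN_odd _) (qN_odd _) (by omega) h).elim
    · exact hl
    · exact (qdyadic_aux _ _ _ _ (qN_odd _) (qN_odd _) (by omega) h.symm).elim
  rw [hl, div_left_inj' (by positivity)] at h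
  have := qN_inj _ _ hl (by exact_mod_cast h)
  rw [Subtype.ext this]

theorem qadj (k : ℕ) (u v : QVert k) (h : (Qgraph k).Adj u v) :
    ∃ (n : ℕ) (j : ℤ), (qpos k u = j / 2 ^ n ∧ qpos k v = (j + 1) / 2 ^ n) ∨
      (qpos k v = j / 2 ^ n ∧ qpos k u = (j + 1) / 2 ^ n) := by
  have base : ∀ σ : List Bool, σ.length ≤ k → s(u, v) = s((qbase k σ).1, (qbase k σ).2) →
    ∃ (n : ℕ) (j : ℤ), (qpos k u = j / 2 ^ n ∧ qpos k v = (j + 1) / 2 ^ n) ∨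
      (qpos k v = j / 2 ^ n ∧ qpos k u = (j + 1) / 2 ^ n) := by
    intro σ hσ he
    obtain ⟨h1, h2⟩ := qpos_base k σ hσ
    rcases qN_diff σ with hd | hd
    · refine ⟨σ.length, (qN σ).1, ?_⟩
      rw [hd] at h2
      push_cast at h2
      rcases Sym2.eq_iff.1 he with ⟨rfl, rfl⟩ | ⟨rfl, rfl⟩
      · exact Or.inl ⟨h1, h2⟩
      · exact Or.inr ⟨h1, h2⟩
    · refine ⟨σ.length, (qN σ).2, ?_⟩
      rw [hd] at h1
      push_cast at h1
      rcases Sym2.eq_iff.1 he with ⟨rfl, rfl⟩ | ⟨rfl, rfl⟩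
      · exact Or.inr ⟨h2, h1⟩
      · exact Or.inl ⟨h2, h1⟩
  rw [Qgraph, SimpleGraph.fromEdgeSet_adj] at h
  rcases h.1 with h | ⟨σ, hσ, h | h⟩
  · exact base [] (Nat.zero_le k) h
  · refine base (false :: σ) hσ ?_
    rw [h, Sym2.eq_swap]; simp [qbase, hσ]
  · refine base (true :: σ) hσ ?_
    rw [h, Sym2.eq_swap]; simp [qbase, hσ]

theorem qdyadic (m n : ℕ) (i j : ℤ) (h1 : (i : ℚ) / 2 ^ m < j / 2 ^ n)
    (h2 : (j : ℚ) / 2 ^ n < (i + 1) / 2 ^ m) (h3 : ((i : ℚ) + 1) / 2 ^ m < (j + 1) / 2 ^ n) :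
    False := by
  rcases le_total m n with h | h
  · obtain ⟨d, rfl⟩ := Nat.exists_eq_add_of_le h
    have e : ∀ x : ℚ, x / 2 ^ m = (x * 2 ^ d) / 2 ^ (m + d) := by
      intro x; rw [pow_add]; field_simp
    rw [e, div_lt_div_iff_of_pos_right (by positivity)] at h2 h3
    have h2' : j < (i + 1) * 2 ^ d := by exact_mod_cast h2
    have h3' : (i + 1) * 2 ^ d < j + 1 := by exact_mod_cast h3
    omega
  · obtain ⟨d, rfl⟩ := Nat.exists_eq_add_of_le h
    have e : ∀ x : ℚ, x / 2 ^ n = (x * 2 ^ d) / 2 ^ (n + d) := by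
      intro x; rw [pow_add]; field_simp
    rw [e, div_lt_div_iff_of_pos_right (by positivity)] at h1 h2
    have h1' : i < j * 2 ^ d := by exact_mod_cast h1
    have h2' : j * 2 ^ d < i + 1 := by exact_mod_cast h2
    omega

theorem q_nonCross (k : ℕ) : NonCross (Qgraph k) (qpos k) := by
  rintro u v x y huv hxy ⟨h1, h2, h3⟩
  have key : ∀ (n : ℕ) (j : ℤ), (j : ℚ) / 2 ^ n < (j + 1) / 2 ^ n := by
    intro n j
    rw [div_lt_div_iff_of_pos_right (by positivity)]
    linarith
  obtain ⟨m, i, ⟨e1, e2⟩ | ⟨e1, e2⟩⟩ := qadj k u v huv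
  · obtain ⟨n, j, ⟨e3, e4⟩ | ⟨e3, e4⟩⟩ := qadj k x y hxy
    · rw [e1, e3] at h1
      rw [e2, e3] at h2
      rw [e2, e4] at h3
      exact qdyadic m n i j h1 h2 h3
    · have := key n j
      rw [← e3, ← e4] at this
      exact lt_asymm this (h2.trans h3)
  · have := key m i
    rw [← e1, ← e2] at this
    exact lt_asymm this (h1.trans h2)

/-- For every positive integer `k`, the graph `𝒬_k` is outerplanar;
consequently neither `K₄` nor `K_{2,3}` is a minor of `𝒬_k`. -/
theorem Qk_outerplanar (k : ℕ) (hk : 0 < k) :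
    Outerplanar (Qgraph k) ∧ ¬ IsMinor K4 (Qgraph k) ∧ ¬ IsMinor K23 (Qgraph k) := by
  have h4 := (q_nonCross k).no_K4 (qpos_inj k)
  have h23 := (q_nonCross k).no_K23 (qpos_inj k)
  exact ⟨⟨h4, h23⟩, h4, h23⟩
end

section
/- For every positive integer k, neither the graph A nor the graph C_{3,2} is a minor of 𝒫_k. -/
/-!
Common definitions: minors, widths, connectivity, the specific graphs
`K4`, `K23`, `C32`, `graphA`, the binary trees `CT_h`, the graphs `𝒫_k`, `𝒬_k`,
the trees `T_h`, homeomorphic embeddings, cascades, and related notions,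
following Dang--Thomas, "Minors of two-connected graphs of large path-width".
-/

open SimpleGraph

def trc {k : ℕ} (S : Set (Option (CTVert k))) (l : List Bool) : Prop :=
  ∃ h : l.length ≤ k, some (⟨l, h⟩ : CTVert k) ∈ S

theorem padj_some {k : ℕ} {u v : CTVert k} (h : (Pgraph k).Adj (some u) (some v)) :
    (∃ b, v.1 = b :: u.1) ∨ (∃ b, u.1 = b :: v.1) := by
  rw [Pgraph, SimpleGraph.fromEdgeSet_adj] at h
  rcases h with ⟨⟨b, σ, hσ, e⟩ | ⟨l, hl, e⟩, _⟩
  · rw [Sym2.eq_iff] at e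
    rcases e with ⟨e1, e2⟩ | ⟨e1, e2⟩
    · left; refine ⟨b, ?_⟩
      rw [Option.some.injEq] at e1 e2; subst e1 e2; rfl
    · right; refine ⟨b, ?_⟩
      rw [Option.some.injEq] at e1 e2; subst e1 e2; rfl
  · simp [Sym2.eq_iff] at e

theorem ext_all {k : ℕ} {Y : Set (Option (CTVert k))} (hc : ((Pgraph k).induce Y).Connected)
    (hn : none ∉ Y) {b : Bool} {σ : List Bool} (h1 : trc Y (b :: σ)) (h2 : ¬ trc Y σ)
    (l : List Bool) (hl : trc Y l) : (b :: σ) <:+ l := by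
  obtain ⟨hb, h1⟩ := h1
  obtain ⟨hl', hl⟩ := hl
  have hr := hc.preconnected ⟨_, h1⟩ ⟨_, hl⟩
  rw [SimpleGraph.reachable_iff_reflTransGen] at hr
  have key : ∀ z : Y, Relation.ReflTransGen ((Pgraph k).induce Y).Adj ⟨_, h1⟩ z →
      ∀ v : CTVert k, z.1 = some v → (b :: σ) <:+ v.1 := by
    intro z hz
    induction hz with
    | refl => 
      intro v hv
      simp only [Option.some.injEq] at hv
      subst hv; exact List.suffix_refl _
    | tail _ hadj ih =>
      rename_i y z _
      intro v hv
      obtain ⟨y, hy⟩ := y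
      obtain ⟨z, hz⟩ := z
      cases y with
      | none => exact absurd hy hn
      | some u =>
        have hu := ih u rfl
        simp only at hv
        subst hv
        rcases padj_some hadj with ⟨c, e⟩ | ⟨c, e⟩
        · rw [e]; exact hu.trans (List.suffix_cons _ _)
        · rw [e, List.suffix_cons_iff] at hu
          rcases hu with hu | hu
          · exfalso
            apply h2
            rw [List.cons.injEq] at hu
            rw [hu.2]
            exact ⟨v.2, hz⟩
          · exact hu
  exact key _ hr _ rfl

def par {k : ℕ} (Y X : Set (Option (CTVert k))) : Prop :=
  ∃ b σ, trc Y (b :: σ) ∧ trc X σ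

theorem trc_disj {k : ℕ} {X Y : Set (Option (CTVert k))} (h : Disjoint X Y) {l : List Bool}
    (hx : trc X l) (hy : trc Y l) : False := by
  obtain ⟨a, hx⟩ := hx
  obtain ⟨_, hy⟩ := hy
  exact Set.disjoint_left.1 h hx hy

theorem par_of_adj {k : ℕ} {X Y : Set (Option (CTVert k))} (hX : none ∉ X) (hY : none ∉ Y)
    (h : ∃ v₁ ∈ X, ∃ v₂ ∈ Y, (Pgraph k).Adj v₁ v₂) : par X Y ∨ par Y X := by
  obtain ⟨u, hu, v, hv, h⟩ := h
  cases u with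
  | none => exact absurd hu hX
  | some u =>
  cases v with
  | none => exact absurd hv hY
  | some v =>
  rcases padj_some h with ⟨c, e⟩ | ⟨c, e⟩
  · right; exact ⟨c, u.1, e ▸ ⟨v.2, hv⟩, ⟨u.2, hu⟩⟩
  · left; exact ⟨c, v.1, e ▸ ⟨u.2, hu⟩, ⟨v.2, hv⟩⟩

theorem par_uniq {k : ℕ} {X Y Z : Set (Option (CTVert k))}
    (hc : ((Pgraph k).induce Y).Connected) (hY : none ∉ Y)
    (hxy : Disjoint X Y) (hyz : Disjoint Z Y) (hxz : Disjoint X Z)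
    (h1 : par Y X) (h2 : par Y Z) : False := by
  obtain ⟨b, σ, h1, h1'⟩ := h1
  obtain ⟨c, τ, h2, h2'⟩ := h2
  have e1 := ext_all hc hY h1 (fun h => trc_disj hxy h1' h) _ h2
  have e2 := ext_all hc hY h2 (fun h => trc_disj hyz h2' h) _ h1
  have e := e1.eq_of_length (le_antisymm e1.length_le e2.length_le)
  rw [List.cons.injEq] at e
  rw [e.2] at h1'
  exact trc_disj hxz h1' h2'

theorem par_cyc {k : ℕ} {X Y Z : Set (Option (CTVert k))}
    (hX : ((Pgraph k).induce X).Connected) (hX' : none ∉ X)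
    (hY : ((Pgraph k).induce Y).Connected) (hY' : none ∉ Y)
    (hZ : ((Pgraph k).induce Z).Connected) (hZ' : none ∉ Z)
    (hxy : Disjoint X Y) (hyz : Disjoint Y Z) (hxz : Disjoint X Z)
    (h1 : par X Y) (h2 : par Y Z) (h3 : par Z X) : False := by
  obtain ⟨b1, s1, h1, h1'⟩ := h1
  obtain ⟨b2, s2, h2, h2'⟩ := h2
  obtain ⟨b3, s3, h3, h3'⟩ := h3
  have e1 := (ext_all hX hX' h1 (fun h => trc_disj hxy h h1') _ h3').length_le
  have e2 := (ext_all hY hY' h2 (fun h => trc_disj hyz h h2') _ h1').length_le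
  have e3 := (ext_all hZ hZ' h3 (fun h => trc_disj hxz h3' h) _ h2').length_le
  simp only [List.length_cons] at e1 e2 e3
  omega

theorem no_tri {k : ℕ} {X Y Z : Set (Option (CTVert k))}
    (hX : ((Pgraph k).induce X).Connected) (hX' : none ∉ X)
    (hY : ((Pgraph k).induce Y).Connected) (hY' : none ∉ Y)
    (hZ : ((Pgraph k).induce Z).Connected) (hZ' : none ∉ Z)
    (hxy : Disjoint X Y) (hyz : Disjoint Y Z) (hxz : Disjoint X Z)
    (h1 : par X Y ∨ par Y X) (h2 : par Y Z ∨ par Z Y) (h3 : par X Z ∨ par Z X) : False := by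
  rcases h1 with h1 | h1 <;> rcases h2 with h2 | h2 <;> rcases h3 with h3 | h3
  · exact par_uniq hX hX' hxy.symm hxz.symm hyz h1 h3
  · exact par_cyc hX hX' hY hY' hZ hZ' hxy hyz hxz h1 h2 h3
  · exact par_uniq hX hX' hxy.symm hxz.symm hyz h1 h3
  · exact par_uniq hZ hZ' hxz hyz hxy h3 h2
  · exact par_uniq hY hY' hxy hyz.symm hxz h1 h2
  · exact par_uniq hY hY' hxy hyz.symm hxz h1 h2
  · exact par_cyc hX hX' hZ hZ' hY hY' hxz hyz.symm hxy h3 h2 h1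
  · exact par_uniq hZ hZ' hxz hyz hxy h3 h2

theorem no_minor {W : Type*} (H : SimpleGraph W) (k : ℕ)
    (hH : ∀ w : W, ∃ a b c, a ≠ w ∧ b ≠ w ∧ c ≠ w ∧ H.Adj a b ∧ H.Adj b c ∧ H.Adj a c)
    (w₀ : W) : ¬ IsMinor H (Pgraph k) := by
  rintro ⟨f, _, hc, hd, ha⟩
  have : ∃ w, ∀ a, a ≠ w → none ∉ f a := by
    by_cases h : ∃ w, none ∈ f w
    · obtain ⟨w, hw⟩ := h
      exact ⟨w, fun a haw h => Set.disjoint_left.1 (hd a w haw) h hw⟩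
    · exact ⟨w₀, fun a _ h' => h ⟨a, h'⟩⟩
  obtain ⟨w, hw⟩ := this
  obtain ⟨a, b, c, na, nb, nc, hab, hbc, hac⟩ := hH w
  exact no_tri (hc a) (hw a na) (hc b) (hw b nb) (hc c) (hw c nc)
    (hd _ _ hab.ne) (hd _ _ hbc.ne) (hd _ _ hac.ne)
    (par_of_adj (hw a na) (hw b nb) (ha _ _ hab))
    (par_of_adj (hw b nb) (hw c nc) (ha _ _ hbc))
    (par_of_adj (hw a na) (hw c nc) (ha _ _ hac))

/-- For every positive integer `k`, neither the graph `A` nor the graph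
`C_{3,2}` is a minor of `𝒫_k`. -/
theorem Pk_has_no_A_or_C32_minor (k : ℕ) (hk : 0 < k) :
    ¬ IsMinor graphA (Pgraph k) ∧ ¬ IsMinor C32 (Pgraph k) := by
  constructor
  · refine no_minor _ k (fun w => ?_) 0
    simp only [graphA, SimpleGraph.fromEdgeSet_adj, Set.mem_insert_iff, Set.mem_singleton_iff]
    by_cases h0 : w = 0
    · subst h0; exact ⟨2, 3, 4, by decide⟩
    by_cases h2 : w = 2
    · subst h2; exact ⟨4, 5, 0, by decide⟩
    by_cases h4 : w = 4
    · subst h4; exact ⟨0, 1, 2, by decide⟩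
    exact ⟨0, 2, 4, Ne.symm h0, Ne.symm h2, Ne.symm h4, by decide⟩
  · refine no_minor _ k (fun w => ?_) (0, 0)
    simp only [C32, SimpleGraph.fromRel_adj]
    obtain ⟨i, j⟩ := w
    refine ⟨(i + 1, 0), (i + 1, 1), (i + 1, 2), ?_⟩
    revert i j
    decide
end
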